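/- arXiv:2008.06401 — 5 statements merged into one kernel-verified Lean document; each statement's English description precedes it below -/
import Mathlib

section
/- For every non-negative integer k and every non-negative integer n, the number of (5k+1)-colour partitions of 5n+4 is divisible by 5; that is, p_{5k+1}(5n+4) ≡ 0 (mod 5). -/
/-- `colouredPartitions r n` is the number of `r`-colour partitions of `n`:
multisets of pairs `(m, c)` with `m` a positive integer part and `c` one of `r`
colours, whose parts (first components, with multiplicity) sum to `n`.  Such a
multiset is encoded by its multiplicity function `f : ℕ+ × Fin r →₀ ℕ`. -/
noncomputable def colouredPartitions (r n : ℕ) : ℕ :=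
  Nat.card {f : ℕ+ × Fin r →₀ ℕ // (f.sum fun x m => (x.1 : ℕ) * m) = n}

open PowerSeries

theorem cp_dvd5 (a : ℤ) : ((a : ZMod 5) = 0) ↔ (5 : ℤ) ∣ a := ZMod.intCast_zmod_eq_zero_iff_dvd a 5

theorem cp_coeff_mul {ι κ : Type*} (A B : ℤ⟦X⟧) (S : Finset ι) (T : Finset κ) (p : ι → ℕ) (q : κ → ℕ)
    (u : ι → ℤ) (v : κ → ℤ) (n : ℕ)
    (hA : ∀ i ≤ n, coeff i A = ∑ k ∈ S, if p k = i then u k else 0)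
    (hB : ∀ i ≤ n, coeff i B = ∑ k ∈ T, if q k = i then v k else 0) :
    coeff n (A * B) = ∑ x ∈ S ×ˢ T, if p x.1 + q x.2 = n then u x.1 * v x.2 else 0 := by
  rw [coeff_mul]
  have : ∀ x ∈ Finset.HasAntidiagonal.antidiagonal n, coeff x.1 A * coeff x.2 B =
      ∑ y ∈ S ×ˢ T, if (p y.1, q y.2) = x then u y.1 * v y.2 else 0 := by
    intro x hx
    rw [Finset.HasAntidiagonal.mem_antidiagonal] at hx
    rw [hA _ (by omega), hB _ (by omega), Finset.sum_mul_sum, Finset.sum_product]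
    refine Finset.sum_congr rfl fun a _ => Finset.sum_congr rfl fun b _ => ?_
    rcases x with ⟨x, y⟩
    simp only [Prod.mk.injEq]
    by_cases h1 : p a = x <;> by_cases h2 : q b = y <;> simp [h1, h2]
  rw [Finset.sum_congr rfl this, Finset.sum_comm]
  refine Finset.sum_congr rfl fun y _ => ?_
  rw [Finset.sum_ite_eq]
  simp

theorem cp_sum_zero (n : ℤ) (S : Finset (ℤ × ℤ)) 
    (hS : ∀ x : ℤ × ℤ, x ∈ S ↔ x.1 * (3 * x.1 - 1) + 2 * (x.2 * (2 * x.2 + 1)) = n) :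
    ∑ x ∈ S, ((Int.negOnePow x.1 : ℤ) * (4 * x.2 + 1)) *
      (2 * (x.2 * (2 * x.2 + 1)) - 3 * (x.1 * (3 * x.1 - 1))) = 0 := by
  have cases4 : ∀ x : ℤ × ℤ, ∃ i t : ℤ, x = (2*i, 2*t-i) ∨ x = (2*i, 2*t+1-i) ∨
      x = (2*i+1, i+2*t+1) ∨ x = (2*i+1, i+2*t) := by
    rintro ⟨k, m⟩
    simp only [Prod.mk.injEq]
    rcases Int.emod_two_eq_zero_or_one k with h | h
    · rcases Int.emod_two_eq_zero_or_one (m + k/2) with h' | h'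
      · exact ⟨k/2, (m+k/2)/2, by omega⟩
      · exact ⟨k/2, (m+k/2)/2, by omega⟩
    · rcases Int.emod_two_eq_zero_or_one (m - k/2) with h' | h'
      · exact ⟨k/2, (m-k/2)/2, by omega⟩
      · exact ⟨k/2, (m-k/2)/2, by omega⟩
  let g : ℤ × ℤ → ℤ × ℤ := fun x =>
    if x.1 % 2 = 0 then
      if (x.2 + x.1/2) % 2 = 0 then (-(x.2 + x.1/2), (x.2 - 3*(x.1/2))/2)
      else (-(x.2+x.1/2), (3*(x.1/2)-x.2-1)/2)
    else
      if (x.2 - x.1/2) % 2 = 0 then (x.2 - x.1/2, -((x.2+3*(x.1/2)+2)/2))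
      else (x.2 - x.1/2, (x.2+3*(x.1/2)+1)/2)
  have gA : ∀ i t : ℤ, g (2*i, 2*t-i) = (2*(-t), 2*(-i)-(-t)) := by
    intro i t
    simp only [g]
    rw [if_pos (by omega), if_pos (by omega)]
    ext <;> simp only <;> omega
  have gB : ∀ i t : ℤ, g (2*i, 2*t+1-i) = (2*(-t-1)+1, (-t-1)+2*i) := by
    intro i t
    simp only [g]
    rw [if_pos (by omega), if_neg (by omega)]
    ext <;> simp only <;> omega
  have gC : ∀ i t : ℤ, g (2*i+1, i+2*t+1) = (2*t+1, t+2*i+1) := by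
    intro i t
    simp only [g]
    rw [if_neg (by omega), if_neg (by omega)]
    ext <;> simp only <;> omega
  have gD : ∀ i t : ℤ, g (2*i+1, i+2*t) = (2*t, 2*(-i-1)+1-t) := by
    intro i t
    simp only [g]
    rw [if_neg (by omega), if_pos (by omega)]
    ext <;> simp only <;> omega
  have se : ∀ i : ℤ, ((Int.negOnePow (2*i) : ℤˣ) : ℤ) = 1 := by
    intro i; rw [Int.negOnePow_even _ (by simp)]; rfl
  have so : ∀ i : ℤ, ((Int.negOnePow (2*i+1) : ℤˣ) : ℤ) = -1 := by
    intro i; rw [Int.negOnePow_odd _ (by simp)]; rfl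
  have hsum : ∀ x : ℤ × ℤ, ((Int.negOnePow x.1 : ℤ) * (4 * x.2 + 1)) *
      (2 * (x.2 * (2 * x.2 + 1)) - 3 * (x.1 * (3 * x.1 - 1))) +
      ((Int.negOnePow (g x).1 : ℤ) * (4 * (g x).2 + 1)) *
      (2 * ((g x).2 * (2 * (g x).2 + 1)) - 3 * ((g x).1 * (3 * (g x).1 - 1))) = 0 := by
    intro x
    obtain ⟨i, t, rfl | rfl | rfl | rfl⟩ := cases4 x
    · rw [gA]; simp only [se, so]; ring
    · rw [gB]; simp only [se, so]; ring
    · rw [gC]; simp only [se, so]; ring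
    · rw [gD]; simp only [se, so]; ring
  refine Finset.sum_involution (fun x _ => g x) (fun x _ => hsum x) ?_ ?_ ?_
  · intro x _ hx h
    apply hx
    have := hsum x
    rw [h] at this
    omega
  · intro x hx
    rw [hS] at hx ⊢
    rw [← hx]
    obtain ⟨i, t, rfl | rfl | rfl | rfl⟩ := cases4 x
    · rw [gA]; ring
    · rw [gB]; ring
    · rw [gC]; ring
    · rw [gD]; ring
  · intro x _
    obtain ⟨i, t, rfl | rfl | rfl | rfl⟩ := cases4 x
    · simp only [gA]; simp
    · simp only [gB, gD]; ext <;> simp only <;> ring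
    · simp only [gC]
    · simp only [gD, gB]; ext <;> simp only <;> ring

theorem cp_partition_gen :
    (PowerSeries.mk fun n => (Fintype.card (Nat.Partition n) : ℤ)) * pentagonalSeries ℤ = 1 := by
  open scoped PowerSeries.WithPiTopology in
  have h1 := Nat.Partition.hasProd_powerSeriesMk_card_restricted ℤ (fun _ => True)
  have h2 := PowerSeries.WithPiTopology.hasProd_one_sub_X_pow ℤ
  have h := h1.mul h2
  have e : (fun i : ℕ => (if True then ∑' j : ℕ, (X : ℤ⟦X⟧) ^ ((i + 1) * j) else 1) *
      (1 - X ^ (i + 1))) = fun _ => 1 := by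
    funext i
    simp only [if_true, pow_mul]
    exact PowerSeries.WithPiTopology.tsum_pow_mul_one_sub_of_constantCoeff_eq_zero (by simp)
  rw [e] at h
  have := h.unique hasProd_one
  rw [← this]
  congr 2
  funext n
  simp [Nat.Partition.restricted]

noncomputable def cpEquivPart (n : ℕ) :
    {g : ℕ+ →₀ ℕ // (g.sum fun x m => (x : ℕ) * m) = n} ≃ Nat.Partition n := by
  have hs : ∀ g : ℕ+ →₀ ℕ, ((Finsupp.toMultiset g).map (fun x : ℕ+ => (x : ℕ))).sum =
      g.sum fun x m => (x : ℕ) * m := by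
    intro g
    rw [Finsupp.toMultiset_map, Finsupp.sum_toMultiset]
    rw [Finsupp.sum_mapDomain_index (by simp) (by intros; simp [add_mul])]
    simp [mul_comm]
  refine Equiv.ofBijective (fun g => ⟨(Finsupp.toMultiset g.1).map (fun x : ℕ+ => (x : ℕ)), ?_, ?_⟩)
    ⟨?_, ?_⟩
  · intro i hi
    obtain ⟨a, _, rfl⟩ := Multiset.mem_map.1 hi
    exact a.pos
  · rw [hs, g.2]
  · intro g g' h
    have := congrArg Nat.Partition.parts h
    simp only at this
    exact Subtype.ext ((Function.LeftInverse.injective Finsupp.toMultiset_toFinsupp) (Multiset.map_injective PNat.coe_injective this))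
  · intro p
    obtain ⟨s, hsp⟩ : ∃ s : Multiset ℕ+, s.map (fun x : ℕ+ => (x : ℕ)) = p.parts := by
      obtain ⟨q, h, _⟩ := p
      lift q to Multiset ℕ+ using fun i hi => h hi
      exact ⟨q, rfl⟩
    refine ⟨⟨Multiset.toFinsupp s, ?_⟩, ?_⟩
    · rw [← hs, Multiset.toFinsupp_toMultiset, hsp, p.parts_sum]
    · ext1
      simp only [Multiset.toFinsupp_toMultiset, hsp]

noncomputable def cpEquivSucc (r n : ℕ) :
    {f : ℕ+ × Fin (r+1) →₀ ℕ // (f.sum fun x m => (x.1 : ℕ) * m) = n} ≃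
    Σ p : Finset.HasAntidiagonal.antidiagonal n, 
      {f : ℕ+ × Fin r →₀ ℕ // (f.sum fun x m => (x.1 : ℕ) * m) = p.1.1} × 
      {g : ℕ+ →₀ ℕ // (g.sum fun x m => (x : ℕ) * m) = p.1.2} := by
  let e : ℕ+ × Fin (r+1) ≃ (ℕ+ × Fin r) ⊕ ℕ+ :=
    ((Equiv.refl _).prodCongr finSumFinEquiv.symm).trans
      ((Equiv.prodSumDistrib _ _ _).trans ((Equiv.refl _).sumCongr (Equiv.prodUnique _ _)))
  have e1 : ∀ x, ((e.symm (Sum.inl x)).1 : ℕ+) = x.1 := by intro x; rfl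
  have e2 : ∀ x, ((e.symm (Sum.inr x)).1 : ℕ+) = x := by intro x; rfl
  let E : (ℕ+ × Fin (r+1) →₀ ℕ) ≃ (ℕ+ × Fin r →₀ ℕ) × (ℕ+ →₀ ℕ) :=
    (Finsupp.domCongr e).toEquiv.trans Finsupp.sumFinsuppEquivProdFinsupp
  have hE : ∀ y, ((E.symm y).sum fun x m => (x.1 : ℕ) * m) =
      (y.1.sum fun x m => (x.1 : ℕ) * m) + (y.2.sum fun x m => (x : ℕ) * m) := by
    rintro ⟨f, g⟩
    have : E.symm (f, g) = Finsupp.equivMapDomain e.symm (Finsupp.sumElim f g) := rfl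
    rw [this, Finsupp.equivMapDomain_eq_mapDomain,
      Finsupp.sum_mapDomain_index (by simp) (by intros; simp [mul_add]), Finsupp.sum_sumElim]
    rfl
  refine (E.subtypeEquiv (q := fun y => (y.1.sum fun x m => (x.1 : ℕ) * m) + (y.2.sum fun x m => (x : ℕ) * m) = n) ?_).trans ?_
  · intro a
    rw [← hE, Equiv.symm_apply_apply]
  · exact
    { toFun := fun y => ⟨⟨(_, _), Finset.HasAntidiagonal.mem_antidiagonal.2 y.2⟩, ⟨y.1.1, rfl⟩, ⟨y.1.2, rfl⟩⟩
      invFun := fun z => ⟨(z.2.1.1, z.2.2.1), by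
        rw [z.2.1.2, z.2.2.2]; exact Finset.HasAntidiagonal.mem_antidiagonal.1 z.1.2⟩
      left_inv := fun y => rfl
      right_inv := by
        rintro ⟨⟨⟨a, b⟩, h⟩, ⟨f, hf⟩, ⟨g, hg⟩⟩
        dsimp only at hf hg
        subst hf hg
        rfl }

theorem cp_finite (r n : ℕ) : 
    Finite {f : ℕ+ × Fin r →₀ ℕ // (f.sum fun x m => (x.1 : ℕ) * m) = n} := by
  induction r generalizing n with
  | zero => infer_instance
  | succ r ih =>
    have := fun n => Finite.of_equiv _ (cpEquivPart n).symm
    exact Finite.of_equiv _ (cpEquivSucc r n).symm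

theorem cp_gen (r : ℕ) : (PowerSeries.mk fun n => (colouredPartitions r n : ℤ)) =
    (PowerSeries.mk fun n => (Fintype.card (Nat.Partition n) : ℤ)) ^ r := by
  induction r with
  | zero =>
    ext n
    rw [pow_zero, coeff_mk, coeff_one, colouredPartitions]
    split_ifs with h
    · subst h
      have : Unique {f : ℕ+ × Fin 0 →₀ ℕ // (f.sum fun x m => (x.1 : ℕ) * m) = 0} :=
        ⟨⟨⟨0, by simp⟩⟩, fun a => Subsingleton.elim _ _⟩
      simp
    · have : IsEmpty {f : ℕ+ × Fin 0 →₀ ℕ // (f.sum fun x m => (x.1 : ℕ) * m) = n} :=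
        ⟨fun ⟨f, hf⟩ => h (by rw [← hf, Subsingleton.elim f 0]; simp)⟩
      simp
  | succ r ih =>
    rw [pow_succ, ← ih]
    ext n
    have := fun n => Finite.of_equiv _ (cpEquivPart n).symm
    have := cp_finite r
    rw [coeff_mul, coeff_mk, colouredPartitions, Nat.card_congr (cpEquivSucc r n), Nat.card_sigma]
    simp only [coeff_mk, Nat.card_prod, Nat.card_congr (cpEquivPart _), Nat.card_eq_fintype_card (α := Nat.Partition _)]
    rw [← Finset.sum_coe_sort (Finset.HasAntidiagonal.antidiagonal n)]
    push_cast
    rfl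

/-- exponent m(2m+1) -/
def cpq (m : ℤ) : ℕ := (m * (2 * m + 1)).toNat

theorem cpq_cast (m : ℤ) : (cpq m : ℤ) = m * (2 * m + 1) := by
  rw [cpq, Int.toNat_of_nonneg]
  rcases le_or_gt 0 m with h | h
  · positivity
  · nlinarith

theorem cpq_bound (m : ℤ) : m ∈ Finset.Icc (-(cpq m : ℤ)) (cpq m) := by
  rw [cpq_cast, Finset.mem_Icc]
  rcases lt_trichotomy m 0 with h | h | h
  · constructor <;> nlinarith
  · subst h; simp
  · constructor <;> nlinarith

theorem cpp_bound (m : ℤ) : m ∈ Finset.Icc (-(pentagonal m : ℤ)) (pentagonal m) := by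
  have := two_mul_natCast_pentagonal m
  rw [Finset.mem_Icc]
  rcases lt_trichotomy m 0 with h | h | h
  · constructor <;> nlinarith
  · subst h; constructor <;> omega
  · constructor <;> nlinarith

/-- Jacobi series -/
noncomputable def cpJ : ℤ⟦X⟧ := PowerSeries.mk fun n =>
  ∑ m ∈ Finset.Icc (-(n : ℤ)) n, if cpq m = n then 4 * m + 1 else 0

theorem cpJ_coeff (N i : ℕ) (h : i ≤ N) : coeff i cpJ =
    ∑ m ∈ Finset.Icc (-(N : ℤ)) N, if cpq m = i then 4 * m + 1 else 0 := by
  rw [cpJ, coeff_mk]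
  refine Finset.sum_subset (Finset.Icc_subset_Icc (by omega) (by omega)) ?_
  intro m _ hm
  rw [if_neg]
  rintro rfl
  exact hm (cpq_bound m)

theorem cpP_coeff (N i : ℕ) (h : i ≤ N) : coeff i (pentagonalSeries ℤ) =
    ∑ m ∈ Finset.Icc (-(N : ℤ)) N, if pentagonal m = i then (Int.negOnePow m : ℤ) else 0 := by
  by_cases hi : i ∈ Set.range pentagonal
  · obtain ⟨k, rfl⟩ := hi
    rw [coeff_pentagonalSeries_pentagonal]
    simp only [pentagonal_inj]
    rw [Finset.sum_ite_eq', if_pos]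
    · exact Int.cast_id
    · have := cpp_bound k
      rw [Finset.mem_Icc] at *
      omega
  · rw [coeff_pentagonalSeries_eq_zero ℤ hi, Finset.sum_eq_zero]
    intro m _
    rw [if_neg]
    rintro rfl
    exact hi ⟨m, rfl⟩

theorem cp_theta (f : ℤ⟦X⟧) (n : ℕ) : coeff n (X * d⁄dX ℤ f) = n * coeff n f := by
  cases n with
  | zero => simp
  | succ n => rw [coeff_succ_X_mul, coeff_derivative]; push_cast; ring

theorem cp_ode : X * (pentagonalSeries ℤ * d⁄dX ℤ cpJ - 3 * cpJ * d⁄dX ℤ (pentagonalSeries ℤ)) = 0 := by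
  have e : X * (pentagonalSeries ℤ * d⁄dX ℤ cpJ - 3 * cpJ * d⁄dX ℤ (pentagonalSeries ℤ)) =
      pentagonalSeries ℤ * (X * d⁄dX ℤ cpJ) - C 3 * ((X * d⁄dX ℤ (pentagonalSeries ℤ)) * cpJ) := by
    rw [show (C 3 : ℤ⟦X⟧) = 3 from map_ofNat C 3]
    ring
  rw [e]
  ext n
  rw [map_sub, coeff_C_mul, map_zero]
  rw [cp_coeff_mul _ _ (Finset.Icc (-(n : ℤ)) n) (Finset.Icc (-(n : ℤ)) n) pentagonal cpq
      (fun m => (Int.negOnePow m : ℤ)) (fun m => cpq m * (4 * m + 1)) n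
      (fun i hi => cpP_coeff n i hi)
      (fun i hi => by
        rw [cp_theta, cpJ_coeff n i hi, Finset.mul_sum]
        refine Finset.sum_congr rfl fun m _ => ?_
        split_ifs with h
        · rw [h]
        · simp),
    cp_coeff_mul _ _ (Finset.Icc (-(n : ℤ)) n) (Finset.Icc (-(n : ℤ)) n) pentagonal cpq
      (fun m => pentagonal m * (Int.negOnePow m : ℤ)) (fun m => (4 * m + 1)) n
      (fun i hi => by
        rw [cp_theta, cpP_coeff n i hi, Finset.mul_sum]
        refine Finset.sum_congr rfl fun m _ => ?_
        split_ifs with h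
        · rw [h]
        · simp)
      (fun i hi => cpJ_coeff n i hi)]
  rw [← Finset.sum_filter, ← Finset.sum_filter, Finset.mul_sum, ← Finset.sum_sub_distrib]
  have key := cp_sum_zero (2 * n) (((Finset.Icc (-(n : ℤ)) n) ×ˢ (Finset.Icc (-(n : ℤ)) n)).filter
    fun x => pentagonal x.1 + cpq x.2 = n) (by
      rintro ⟨k, m⟩
      have h1 := cpp_bound k
      have h2 := cpq_bound m
      simp only [Finset.mem_filter, Finset.mem_product, Finset.mem_Icc] at *
      rw [← two_mul_natCast_pentagonal, ← cpq_cast]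
      omega)
  rw [← mul_right_inj' (two_ne_zero (α := ℤ)), mul_zero, ← key, Finset.mul_sum]
  refine Finset.sum_congr rfl fun x _ => ?_
  rw [← two_mul_natCast_pentagonal, ← cpq_cast]
  ring

theorem cp_jacobi (G : ℤ⟦X⟧) (hG : G * pentagonalSeries ℤ = 1) :
    cpJ = pentagonalSeries ℤ ^ 3 := by
  have h0 : pentagonalSeries ℤ * d⁄dX ℤ cpJ - 3 * cpJ * d⁄dX ℤ (pentagonalSeries ℤ) = 0 :=
    (mul_eq_zero.1 cp_ode).resolve_left X_ne_zero
  have hP0 : constantCoeff (pentagonalSeries ℤ) = 1 := by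
    rw [← coeff_zero_eq_constantCoeff_apply, cpP_coeff 0 0 le_rfl]
    simp [pentagonal_def]
  have hJ0 : constantCoeff cpJ = 1 := by
    rw [← coeff_zero_eq_constantCoeff_apply, cpJ_coeff 0 0 le_rfl]
    simp [cpq]
  have hG0 : constantCoeff G = 1 := by
    have := congrArg constantCoeff hG
    simpa [hP0] using this
  have hd : d⁄dX ℤ G * pentagonalSeries ℤ + G * d⁄dX ℤ (pentagonalSeries ℤ) = 0 := by
    have := congrArg (d⁄dX ℤ) hG
    rw [Derivation.leibniz, derivative_one, smul_eq_mul, smul_eq_mul] at this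
    rw [← this]; ring
  have : cpJ * G ^ 3 = 1 := by
    apply derivative.ext
    · rw [Derivation.leibniz, derivative_one, smul_eq_mul, smul_eq_mul, derivative_pow]
      push_cast
      generalize d⁄dX ℤ G = G' at *
      generalize d⁄dX ℤ cpJ = J' at *
      generalize d⁄dX ℤ (pentagonalSeries ℤ) = P' at *
      generalize pentagonalSeries ℤ = P at *
      try simp only [Nat.add_one_sub_one]
      linear_combination (-(3 * cpJ * G ^ 2 * G') - G ^ 3 * J') * hG + 3 * cpJ * G ^ 3 * hd + G ^ 4 * h0
    · simp [hJ0, hG0]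
  calc cpJ = cpJ * (G * pentagonalSeries ℤ) ^ 3 := by rw [hG]; ring
    _ = (cpJ * G ^ 3) * pentagonalSeries ℤ ^ 3 := by ring
    _ = _ := by rw [this, one_mul]

theorem cp_phi4 (n : ℕ) : (5 : ℤ) ∣ coeff (5 * n + 4) (pentagonalSeries ℤ * cpJ) := by
  rw [cp_coeff_mul _ _ _ _ _ _ _ _ _ (fun i hi => cpP_coeff (5 * n + 4) i hi)
    (fun i hi => cpJ_coeff (5 * n + 4) i hi)]
  refine Finset.dvd_sum fun x _ => ?_
  split_ifs with h
  · apply Dvd.dvd.mul_left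
    obtain ⟨k, m⟩ := x
    have h1 := two_mul_natCast_pentagonal k
    have h2 := cpq_cast m
    simp only at *
    have h3 : k * (3 * k - 1) + 2 * (m * (2 * m + 1)) = 2 * (5 * n + 4) := by
      rw [← h1, ← h2, ← mul_add]; congr 1; exact_mod_cast h
    have h4 := congrArg (Int.cast : ℤ → ZMod 5) h3
    rw [← cp_dvd5] 
    push_cast at h4 ⊢
    have h5 : (5 : ZMod 5) = 0 := rfl
    rw [h5] at h4
    generalize (k : ZMod 5) = a at *
    generalize (m : ZMod 5) = b at *
    rw [zero_mul] at h4
    revert a b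
    decide
  · simp

theorem cp_pow5 (H : (ZMod 5)⟦X⟧) (i : ℕ) (hi : ¬ 5 ∣ i) : coeff i (H ^ 5) = 0 := by
  have : Fact (Nat.Prime 5) := ⟨by norm_num⟩
  have h : (PowerSeries.expand 5 (by norm_num) H).map (frobenius (ZMod 5) 5) = H ^ 5 :=
    MvPowerSeries.map_frobenius_expand 5 (by norm_num)
  rw [← h, coeff_map, coeff_expand_of_not_dvd _ _ _ hi, map_zero]

theorem colouredPartitions_cong_mod5_1 (k n : ℕ) :
    5 ∣ colouredPartitions (5 * k + 1) (5 * n + 4) := by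
  have hg := cp_gen (5 * k + 1)
  have hG := cp_partition_gen
  have hJ := cp_jacobi _ hG
  generalize (PowerSeries.mk fun n => (Fintype.card (Nat.Partition n) : ℤ)) = G at *
  have e : G ^ (5 * k + 1) = (pentagonalSeries ℤ * cpJ) * (G ^ (k + 1)) ^ 5 := by
    rw [hJ]
    calc G ^ (5 * k + 1) = G ^ (5 * k + 1) * (G * pentagonalSeries ℤ) ^ 4 := by rw [hG]; ring
      _ = _ := by ring
  have hc := congrArg (coeff (5 * n + 4)) (hg.trans e)
  rw [coeff_mk] at hc
  rw [← Int.natCast_dvd_natCast]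
  push_cast
  rw [hc, ← cp_dvd5]
  change Int.castRingHom (ZMod 5) _ = 0
  rw [← coeff_map, map_mul, map_pow, coeff_mul]
  refine Finset.sum_eq_zero fun x hx => ?_
  rw [Finset.HasAntidiagonal.mem_antidiagonal] at hx
  by_cases h5 : 5 ∣ x.2
  · obtain ⟨m, hm⟩ : ∃ m, x.1 = 5 * m + 4 := ⟨x.1 / 5, by omega⟩
    rw [hm, coeff_map]
    have := cp_phi4 m
    rw [← cp_dvd5] at this
    rw [eq_intCast, this, zero_mul]
  · rw [cp_pow5 _ _ h5, mul_zero]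
end

section
/- For every non-negative integer k, every non-negative integer n, and every i ∈ {2, 3, 4}, the number of (5k+2)-colour partitions of 5n+i is divisible by 5; that is, p_{5k+2}(5n+i) ≡ 0 (mod 5). -/
open Finset
section
variable {R : Type*} [CommRing R]

def QP (q : R) (n : ℕ) : R := ∏ i ∈ range n, (1 - q ^ (i + 1))

def QB (q : R) : ℕ → ℕ → R
  | _, 0 => 1
  | 0, _ + 1 => 0
  | n + 1, k + 1 => QB q n k + q ^ (k + 1) * QB q n (k + 1)

theorem QB_zero_right (q : R) (n : ℕ) : QB q n 0 = 1 := by cases n <;> rfl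

theorem QB_succ (q : R) (n k : ℕ) :
    QB q (n + 1) (k + 1) = QB q n k + q ^ (k + 1) * QB q n (k + 1) := rfl

theorem QB_gt (q : R) (n : ℕ) : ∀ k, n < k → QB q n k = 0 := by
  induction n with
  | zero => intro k hk; cases k with
    | zero => omega
    | succ k => rfl
  | succ n ih => intro k hk; cases k with
    | zero => omega
    | succ k => rw [QB_succ, ih _ (by omega), ih _ (by omega)]; simp

theorem QB_self (q : R) (n : ℕ) : QB q n n = 1 := by
  induction n with
  | zero => rfl
  | succ n ih => rw [QB_succ, ih, QB_gt q n (n+1) (by omega)]; simp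

theorem QP_succ (q : R) (n : ℕ) : QP q (n + 1) = QP q n * (1 - q ^ (n + 1)) := by
  simp [QP, prod_range_succ]

theorem QB_mul (q : R) (N : ℕ) : ∀ a b, a + b = N → QB q (a + b) a * QP q a * QP q b = QP q (a + b) := by
  induction N with
  | zero => intro a b h
            obtain rfl : a = 0 := by omega
            obtain rfl : b = 0 := by omega
            simp [QP, QB_zero_right]
  | succ N ih =>
    intro a b h
    rcases a with _ | a
    · simp [QP, QB_zero_right]
    rcases b with _ | b
    · simp [QP, QB_self]
    have h1 := ih a (b + 1) (by omega)
    have h2 := ih (a + 1) b (by omega)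
    rw [show a + 1 + (b + 1) = (a + b + 1) + 1 by ring, QB_succ, QP_succ q (a+b+1)]
    rw [show a + (b + 1) = a + b + 1 by ring] at h1
    rw [show a + 1 + b = a + b + 1 by ring] at h2
    rw [QP_succ q b] at h1 ⊢
    rw [QP_succ q a] at h2 ⊢
    linear_combination (1 - q ^ (a+1)) * h1 + q ^ (a+1) * (1 - q ^ (b+1)) * h2

theorem qbinom (q x : R) (N : ℕ) : ∀ y : R, ∏ i ∈ range N, (x + y * q ^ i) =
    ∑ k ∈ range (N + 1), QB q N k * q ^ (k.choose 2) * x ^ (N - k) * y ^ k := by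
  induction N with
  | zero => intro y; simp [QB_zero_right]
  | succ N ih =>
    intro y
    rw [prod_range_succ']
    have h := ih (y * q)
    have e : ∏ k ∈ range N, (x + y * q ^ (k + 1)) = ∏ i ∈ range N, (x + y * q * q ^ i) := by
      refine prod_congr rfl fun i _ => by ring
    rw [e, h, sum_range_succ' _ (N+1)]
    simp only [QB_succ, QB_zero_right]
    have e2 : ∀ k ∈ range (N+1), (QB q N k + q ^ (k + 1) * QB q N (k + 1)) * q ^ (k + 1).choose 2 * x ^ (N + 1 - (k + 1)) * y ^ (k + 1)
      = y * (QB q N k * q ^ (k.choose 2) * x ^ (N - k) * (y * q) ^ k) +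
        QB q N (k+1) * q ^ ((k+1).choose 2) * x ^ (N - k) * (y * q) ^ (k+1) := by
      intro k _
      rw [Nat.succ_sub_succ, show (k+1).choose 2 = k + k.choose 2 by
        rw [Nat.choose_succ_succ' k 1]; simp]
      ring
    rw [sum_congr rfl e2, sum_add_distrib, ← mul_sum, add_assoc]
    have e3 : ∑ k ∈ range (N+1), QB q N (k+1) * q ^ ((k+1).choose 2) * x ^ (N - k) * (y * q) ^ (k+1) + 1 * q ^ Nat.choose 0 2 * x ^ (N + 1 - 0) * y ^ 0 = x * ∑ k ∈ range (N + 1), QB q N k * q ^ (k.choose 2) * x ^ (N - k) * (y * q) ^ k := by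
      rw [sum_range_succ, QB_gt q N (N+1) (by omega), sum_range_succ' _ N, mul_add, mul_sum]
      simp only [QB_zero_right]
      congr 1
      · simp only [zero_mul, add_zero]
        refine sum_congr rfl fun k hk => ?_
        rw [mem_range] at hk
        rw [show N - k = (N - (k+1)) + 1 by omega]
        ring
      · simp; ring
    rw [e3]; ring

theorem prod_a (q : R) (n : ℕ) : ∏ i ∈ range n, (q ^ n - q ^ i) = (-1) ^ n * q ^ (n.choose 2) * QP q n := by
  have h : ∀ n, ∏ i ∈ range n, q ^ i = q ^ (n.choose 2) := by
    intro n
    rw [prod_pow_eq_pow_sum, sum_range_id, Nat.choose_two_right]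
  rw [← h n, QP, ← prod_range_reflect (fun i => 1 - q ^ (i+1))]
  have : (-1 : R) ^ n = ∏ i ∈ range n, (-1) := by simp
  rw [this, ← prod_mul_distrib, ← prod_mul_distrib]
  refine prod_congr rfl fun i hi => ?_
  rw [mem_range] at hi
  have : q ^ n = q ^ i * q ^ (n - 1 - i + 1) := by rw [← pow_add]; congr 1; omega
  rw [this]; ring

theorem prod_b (q : R) (n : ℕ) : ∏ i ∈ range n, (q ^ n - q ^ (n + 1 + i)) = q ^ (n * n) * QP q n := by
  have : q ^ (n * n) = ∏ i ∈ range n, q ^ n := by simp [pow_mul]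
  rw [this, QP, ← prod_mul_distrib]
  refine prod_congr rfl fun i hi => ?_
  ring

theorem qderiv_id (q : R) (n : ℕ) : (-1) ^ n * q ^ (n.choose 2 + n + n * n) * QP q n ^ 2 =
    ∑ k ∈ range (2 * n + 2), QB q (2 * n + 1) k * q ^ (k.choose 2 + n * (2 * n + 1 - k)) * (2 * n + 1 - k : ℕ) * (-1) ^ k := by
  let T : Polynomial R := Polynomial.X
  have h := qbinom (Polynomial.C q) (Polynomial.C (q ^ n) * T) (2 * n + 1) (-1)
  have hQ : ∀ N k, QB (Polynomial.C q) N k = Polynomial.C (QB q N k) := by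
    intro N
    induction N with
    | zero => intro k; cases k <;> simp [QB]
    | succ N ih => intro k; cases k with
      | zero => simp [QB]
      | succ k => simp [QB_succ, ih]
  have h' := congrArg (fun p => (Polynomial.derivative p).eval 1) h
  have L : (Polynomial.derivative (∏ i ∈ range (2 * n + 1), (Polynomial.C (q ^ n) * T + -1 * Polynomial.C q ^ i))).eval 1 = (-1) ^ n * q ^ (n.choose 2 + n + n * n) * QP q n ^ 2 := by
    rw [show 2 * n + 1 = n + 1 + n by ring, prod_range_add, prod_range_succ]
    simp only [T, Polynomial.derivative_mul, Polynomial.eval_add, Polynomial.eval_mul, Polynomial.eval_prod]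
    simp [← sub_eq_add_neg, prod_a, prod_b]
    ring
  rw [L] at h'
  rw [h', Polynomial.derivative_sum, Polynomial.eval_finsetSum]
  refine sum_congr rfl fun k _ => ?_
  have : QB (Polynomial.C q) (2 * n + 1) k * Polynomial.C q ^ k.choose 2 * (Polynomial.C (q ^ n) * T) ^ (2 * n + 1 - k) * (-1) ^ k = Polynomial.C (QB q (2 * n + 1) k * q ^ (k.choose 2 + n * (2 * n + 1 - k)) * (-1)^k) * T ^ (2 * n + 1 - k) := by
    rw [hQ]; simp only [map_mul, map_pow, map_neg, map_one, mul_pow]; ring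
  rw [this, Polynomial.derivative_C_mul_X_pow, Polynomial.eval_C_mul]
  simp only [Polynomial.eval_pow, Polynomial.eval_X, one_pow]
  ring
end

section
open PowerSeries

theorem two_choose (k : ℕ) : 2 * k.choose 2 + k = k * k := by
  induction k with
  | zero => rfl
  | succ k ih => rw [Nat.choose_succ_succ' k 1]; simp; nlinarith

instance fact5 : Fact (Nat.Prime 5) := ⟨by norm_num⟩

abbrev PS := PowerSeries (ZMod 5)
noncomputable abbrev QX (n : ℕ) : PS := QP (X : PS) n

theorem QX_unit (n : ℕ) : IsUnit (QX n) := by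
  rw [PowerSeries.isUnit_iff_constantCoeff]
  simp [QX, QP, map_prod]

theorem QX_dvd (a b : ℕ) : (X : PS) ^ (a + 1) ∣ QX (a + b) - QX a := by
  induction b with
  | zero => simp
  | succ b ih =>
    have : QX (a + (b + 1)) - QX a = (QX (a + b) - QX a) - X ^ (a+1) * (X ^ b * QX (a + b)) := by
      rw [QX, ← add_assoc, QP_succ]; ring
    rw [this]
    exact dvd_sub ih (Dvd.intro _ rfl)

theorem QB_symm (a b : ℕ) : QB (X : PS) (a + b) a = QB (X : PS) (a + b) b := by
  have h1 := QB_mul (X : PS) _ a b rfl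
  have h2 := QB_mul (X : PS) _ b a rfl
  rw [add_comm b a] at h2
  have hu := (QX_unit a).mul (QX_unit b)
  apply hu.mul_right_cancel
  simp only [QX]
  linear_combination h1 - h2

theorem sum_fold (n : ℕ) (g : ℕ → PS) :
    ∑ k ∈ range (2 * n + 2), g k = ∑ j ∈ range (n + 1), (g (n - j) + g (n + 1 + j)) := by
  rw [show 2 * n + 2 = (n + 1) + (n + 1) by ring, sum_range_add, sum_add_distrib,
    ← sum_range_reflect g (n+1)]
  simp

theorem QX_sq (n : ℕ) : QX n ^ 2 = ∑ j ∈ range (n + 1),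
    (-1) ^ j * ((2 * j + 1 : ℕ) : PS) * X ^ ((j+1).choose 2) * QB (X : PS) (2 * n + 1) (n - j) := by
  have h := qderiv_id (X : PS) n
  rw [sum_fold] at h
  have hx : (X : PS) ^ (n.choose 2 + n + n * n) ≠ 0 := pow_ne_zero _ X_ne_zero
  apply mul_left_cancel₀ hx
  have hs : ((-1 : PS) ^ n) * (-1) ^ n = 1 := by rw [← mul_pow]; simp
  have h2 : (X : PS) ^ (n.choose 2 + n + n * n) * QX n ^ 2 = (-1) ^ n * ((-1) ^ n * X ^ (n.choose 2 + n + n * n) * QP X n ^ 2) := by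
    simp only [QX]
    linear_combination (- X ^ (n.choose 2 + n + n * n) * QP X n ^ 2) * hs
  rw [h2, h, mul_sum, mul_sum]
  refine sum_congr rfl fun j hj => ?_
  obtain ⟨m, rfl⟩ : ∃ m, n = j + m := ⟨n - j, by rw [mem_range] at hj; omega⟩
  have c1 := two_choose (j+1)
  have c2 := two_choose m
  have c3 := two_choose (j+m)
  have c4 := two_choose (j + m + 1 + j)
  rw [show j + m - j = m by omega, show 2 * (j + m) + 1 - m = j + m + 1 + j by omega,
    show 2 * (j + m) + 1 - (j + m + 1 + j) = m by omega]
  have hB := QB_symm m (j + m + 1 + j)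
  rw [show m + (j + m + 1 + j) = 2 * (j + m) + 1 by ring] at hB
  rw [← hB]
  rw [show m.choose 2 + (j + m) * (j + m + 1 + j) = ((j+m).choose 2 + (j+m) + (j+m)*(j+m)) + (j+1).choose 2 by nlinarith,
    show (j + m + 1 + j).choose 2 + (j + m) * m = ((j+m).choose 2 + (j+m) + (j+m)*(j+m)) + (j+1).choose 2 by nlinarith]
  have hj2 : ((-1 : PS) ^ j) * (-1) ^ j = 1 := by rw [← mul_pow]; simp
  have hm2 : ((-1 : PS) ^ m) * (-1) ^ m = 1 := by rw [← mul_pow]; simp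
  simp only [pow_add _ ((j+m).choose 2 + (j+m) + (j+m)*(j+m)) _]
  generalize (X : PS) ^ ((j+m).choose 2 + (j+m) + (j+m)*(j+m)) = A
  generalize (X : PS) ^ ((j+1).choose 2) = A'
  generalize QB (X : PS) (2 * (j + m) + 1) m = A''
  push_cast
  simp only [pow_add, pow_one]
  generalize (-1 : PS) ^ j = s at *
  generalize (-1 : PS) ^ m = t at *
  linear_combination (s * A'' * A * A' * (1 + 2 * j + m) - A''*A*A'*m * s * s * s) * hm2 - A'' * A * A' * m * s * hj2

theorem QX_cube (n : ℕ) : X ^ (n + 1) ∣ QX n ^ 3 - ∑ j ∈ range (n + 1),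
    (-1) ^ j * ((2 * j + 1 : ℕ) : PS) * X ^ ((j+1).choose 2) := by
  rw [pow_succ (QX n) 2, QX_sq, sum_mul, ← sum_sub_distrib]
  refine dvd_sum fun j hj => ?_
  obtain ⟨m, rfl⟩ : ∃ m, n = j + m := ⟨n - j, by rw [mem_range] at hj; omega⟩
  rw [show j + m - j = m by omega]
  have h := QB_mul (X : PS) _ m (j + m + 1 + j) rfl
  rw [show m + (j + m + 1 + j) = 2 * (j + m) + 1 by ring] at h
  have hd : (X : PS) ^ (m + 1) ∣ QB (X : PS) (2 * (j + m) + 1) m * QX (j + m) - 1 := by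
    rw [← (QX_unit (j + m + 1 + j)).dvd_mul_left]
    have h1 := QX_dvd m j
    rw [add_comm m j] at h1
    have h2 : (X : PS) ^ (m + 1) ∣ _ := (pow_dvd_pow X (by omega)).trans (QX_dvd (j + m + 1 + j) m)
    rw [show j + m + 1 + j + m = 2 * (j + m) + 1 by ring] at h2
    have := dvd_add (h1.mul_left (QB (X : PS) (2 * (j + m) + 1) m * QX (j + m + 1 + j))) h2
    convert this using 1
    simp only [QX] at *
    linear_combination h
  have hT : j ≤ (j+1).choose 2 := by
    rw [Nat.choose_succ_succ' j 1]; simp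
  have : (X : PS) ^ (j + m + 1) ∣ X ^ ((j+1).choose 2) * (QB (X : PS) (2 * (j + m) + 1) m * QX (j + m) - 1) := by
    rw [add_assoc, pow_add]
    exact mul_dvd_mul (pow_dvd_pow _ hT) hd
  convert this.mul_left ((-1) ^ j * ((2 * j + 1 : ℕ) : PS)) using 1
  ring

theorem coeff_cube (n d : ℕ) (hd : d ≤ n) (h : d % 5 = 2 ∨ d % 5 = 3 ∨ d % 5 = 4) :
    coeff d (QX n ^ 3) = 0 := by
  have h1 := (X_pow_dvd_iff.1 (QX_cube n)) d (by omega)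
  rw [map_sub, sub_eq_zero] at h1
  rw [h1, map_sum]
  refine sum_eq_zero fun j _ => ?_
  have e : (-1) ^ j * ((2 * j + 1 : ℕ) : PS) * X ^ ((j+1).choose 2) = C ((-1) ^ j * ((2 * j + 1 : ℕ) : ZMod 5)) * X ^ ((j+1).choose 2) := by
    rw [map_mul, map_pow, map_neg, map_one, map_natCast]
  rw [e, coeff_C_mul, coeff_X_pow]
  split_ifs with hdj
  · have c := two_choose (j+1)
    rw [← hdj] at c
    have : 5 ∣ 2 * j + 1 := by
      have h5 : j % 5 < 5 := Nat.mod_lt _ (by norm_num)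
      obtain ⟨a, b, rfl, hb⟩ : ∃ a b, j = 5 * a + b ∧ b < 5 := ⟨j / 5, j % 5, by omega, h5⟩
      have : (5 * a + b) % 5 = 2 := by
        have c2 : 2 * d = 5 * (5 * a * a + 2 * a * b + a) + b * b + b := by nlinarith
        generalize 5 * a * a + 2 * a * b + a = t at c2
        interval_cases b <;> omega
      omega
    rw [(ZMod.natCast_eq_zero_iff _ _).2 this]; simp
  · simp

def S5 (f : PS) : Prop := ∀ e, ¬ 5 ∣ e → coeff e f = 0

theorem S5.mul {f g : PS} (hf : S5 f) (hg : S5 g) : S5 (f * g) := by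
  intro e he
  rw [coeff_mul]
  refine sum_eq_zero fun p hp => ?_
  rw [HasAntidiagonal.mem_antidiagonal] at hp
  by_cases h : 5 ∣ p.1
  · rw [hg p.2 (by omega), mul_zero]
  · rw [hf _ h, zero_mul]

theorem S5_one : S5 1 := by
  intro e he
  rw [coeff_one, if_neg]; rintro rfl; simp at he

theorem S5.pow {f : PS} (hf : S5 f) (k : ℕ) : S5 (f ^ k) := by
  induction k with
  | zero => simpa using S5_one
  | succ k ih => rw [pow_succ]; exact ih.mul hf

theorem S5_QX (n : ℕ) : S5 (QX n ^ 5) := by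
  induction n with
  | zero => simpa [QX, QP] using S5_one
  | succ n ih =>
    rw [QX, QP_succ, mul_pow]
    refine ih.mul ?_
    have : CharP PS 5 := charP_of_injective_ringHom (f := (C : ZMod 5 →+* PS)) C_injective 5
    rw [sub_pow_char, one_pow, ← pow_mul]
    intro e he
    rw [map_sub, S5_one e he, coeff_X_pow, if_neg]
    · simp
    · rintro rfl; simp at he

theorem key (k N : ℕ) (G : PS) (hG : X ^ (N + 1) ∣ G * QX N ^ (5 * k + 2) - 1) :
    ∀ d, d ≤ N → (d % 5 = 2 ∨ d % 5 = 3 ∨ d % 5 = 4) → coeff d G = 0 := by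
  have hU : S5 ((QX N ^ 5) ^ (k + 1)) := (S5_QX N).pow _
  have hU0 : coeff 0 ((QX N ^ 5) ^ (k + 1)) = 1 := by
    simp [QX, QP, map_prod]
  have h1 : X ^ (N + 1) ∣ (QX N ^ 5) ^ (k + 1) * G - QX N ^ 3 := by
    convert hG.mul_left (QX N ^ 3) using 1
    ring
  intro d
  induction d using Nat.strong_induction_on with
  | _ d ih =>
    intro hd h
    have h2 := (X_pow_dvd_iff.1 h1) d (by omega)
    rw [map_sub, coeff_cube N d hd h, sub_zero, coeff_mul, sum_eq_single (0, d)] at h2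
    · simpa only [hU0, one_mul] using h2
    · intro p hp hne
      rw [HasAntidiagonal.mem_antidiagonal] at hp
      by_cases h5 : 5 ∣ p.1
      · rw [ih p.2, mul_zero]
        · have : p.1 ≠ 0 := by
            intro h0; apply hne; ext <;> simp <;> omega
          omega
        · omega
        · omega
      · rw [hU _ h5, zero_mul]
    · simp

noncomputable def geo (m : ℕ) : PS := PowerSeries.mk fun n => if m ∣ n then 1 else 0

theorem geo_mul (m : ℕ) (hm : 0 < m) : geo m * (1 - X ^ m) = 1 := by
  ext n
  rw [mul_sub, mul_one, map_sub, coeff_mul_X_pow', geo, coeff_mk, coeff_one]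
  by_cases h0 : n = 0
  · subst h0; simp; omega
  · rw [if_neg h0]
    by_cases h : m ≤ n
    · rw [if_pos h, coeff_mk]
      simp [Nat.dvd_sub_self_right, h, not_lt.2 h, Nat.dvd_sub_iff_left h (dvd_refl m)]
    · rw [if_neg h, if_neg, sub_zero]
      intro hd; exact h (Nat.le_of_dvd (by omega) hd)

def colS (N r : ℕ) : Finset (ℕ+ × Fin r) := ((range N).map ⟨Nat.succPNat, Nat.succPNat_injective⟩) ×ˢ univ

theorem mem_colS (N r : ℕ) (x : ℕ+ × Fin r) : x ∈ colS N r ↔ (x.1 : ℕ) ≤ N := by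
  simp only [colS, mem_product, mem_univ, and_true, mem_map, mem_range, Function.Embedding.coeFn_mk]
  constructor
  · rintro ⟨a, ha, h⟩; rw [← h, Nat.succPNat_coe]; omega
  · intro h
    have := x.1.pos
    refine ⟨(x.1 : ℕ) - 1, by omega, ?_⟩
    apply PNat.eq; rw [Nat.succPNat_coe]; omega

theorem prod_colS (N r : ℕ) : (∏ x ∈ colS N r, geo x.1) * QX N ^ r = 1 := by
  rw [colS, prod_product, prod_map]
  simp only [prod_const, card_univ, Fintype.card_fin, prod_pow, Function.Embedding.coeFn_mk, Nat.succPNat_coe]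
  rw [← mul_pow, QX, QP, ← prod_mul_distrib, prod_eq_one, one_pow]
  intro i _
  exact geo_mul _ (by omega)

theorem coeff_colS (N r d : ℕ) (hd : d ≤ N) :
    coeff d (∏ x ∈ colS N r, geo x.1) = (colouredPartitions r d : ZMod 5) := by
  classical
  rw [PowerSeries.coeff_prod]
  simp only [geo, coeff_mk]
  have hS : ∀ f : ℕ+ × Fin r →₀ ℕ, (f.sum fun x m => (x.1 : ℕ) * m) = d → f.support ⊆ colS N r := by
    intro f hf x hx
    rw [mem_colS]
    have h1 : (x.1 : ℕ) * f x ≤ d := by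
      rw [← hf]
      exact single_le_sum (f := fun x : ℕ+ × Fin r => (x.1 : ℕ) * f x) (fun _ _ => Nat.zero_le _) hx
    have : 0 < f x := Nat.pos_of_ne_zero (Finsupp.mem_support_iff.1 hx)
    nlinarith
  simp only [prod_boole]
  rw [sum_boole]
  congr 1
  rw [colouredPartitions, ← Nat.card_eq_finsetCard]
  apply Nat.card_congr
  refine ⟨fun l => ⟨Finsupp.onFinset (colS N r) (fun x => l.1 x / x.1) ?_, ?_⟩,
    fun f => ⟨Finsupp.onFinset (colS N r) (fun x => x.1 * f.1 x) ?_, ?_⟩, ?_, ?_⟩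
  · intro x hx
    have h := l.2
    rw [mem_filter, mem_finsuppAntidiag] at h
    apply h.1.2
    rw [Finsupp.mem_support_iff]
    intro h0; rw [h0] at hx; simp at hx
  · have h := l.2
    rw [mem_filter, mem_finsuppAntidiag] at h
    refine (Finsupp.onFinset_sum _ (fun _ => Nat.mul_zero _)).trans (Eq.trans ?_ h.1.1)
    exact sum_congr rfl fun x hx => Nat.mul_div_cancel' (h.2 x hx)
  · intro x hx
    apply hS _ f.2
    rw [Finsupp.mem_support_iff]
    intro h0; rw [h0] at hx; simp at hx
  · rw [mem_filter, mem_finsuppAntidiag]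
    refine ⟨⟨?_, Finsupp.support_onFinset_subset⟩, fun x _ => ?_⟩
    · have h := f.2
      have h3 := Finsupp.sum_of_support_subset f.1 (hS f.1 h) (fun x m => (x.1 : ℕ) * m)
        (fun _ _ => Nat.mul_zero _)
      exact h3.symm.trans h
    · simp
  · intro l
    have h := l.2
    rw [mem_filter, mem_finsuppAntidiag] at h
    ext x
    simp only [Finsupp.onFinset_apply]
    by_cases hx : x ∈ colS N r
    · exact Nat.mul_div_cancel' (h.2 x hx)
    · have : l.1 x = 0 := by
        by_contra h0
        exact hx (h.1.2 (Finsupp.mem_support_iff.2 h0))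
      rw [this]; simp
  · intro f
    ext x
    simp only [Finsupp.onFinset_apply]
    exact Nat.mul_div_cancel_left _ x.1.pos
end

theorem colouredPartitions_cong_mod5_2 (k n i : ℕ) (hi : i = 2 ∨ i = 3 ∨ i = 4) :
    5 ∣ colouredPartitions (5 * k + 2) (5 * n + i) := by
  set d := 5 * n + i with hd
  rw [← ZMod.natCast_eq_zero_iff]
  have h := key k d (PowerSeries.mk fun e => (colouredPartitions (5 * k + 2) e : ZMod 5)) ?_ d le_rfl (by omega)
  · simpa using h
  · have h1 : (PowerSeries.X : PS) ^ (d + 1) ∣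
        PowerSeries.mk (fun e => (colouredPartitions (5 * k + 2) e : ZMod 5)) - ∏ x ∈ colS d (5 * k + 2), geo x.1 := by
      rw [PowerSeries.X_pow_dvd_iff]
      intro m hm
      rw [map_sub, coeff_colS d _ m (by omega), PowerSeries.coeff_mk, sub_self]
    have h2 := h1.mul_right (QX d ^ (5 * k + 2))
    rwa [sub_mul, prod_colS] at h2
end

section
/- For every non-negative integer k, every non-negative integer n, and every i ∈ {3, 4}, the number of (5k+4)-colour partitions of 5n+i is divisible by 5; that is, p_{5k+4}(5n+i) ≡ 0 (mod 5). -/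
open PowerSeries Filter in
/-- Geometric series `1 / (1 - X^m)` over `ZMod 5`. -/
noncomputable def geomAux (m : ℕ) : PowerSeries (ZMod 5) :=
  PowerSeries.mk fun n => if m ∣ n then 1 else 0

open PowerSeries Filter in
theorem geomAux_mul (m : ℕ) (hm : 0 < m) : geomAux m * (1 - X ^ m) = 1 := by
  ext n
  rw [mul_sub, mul_one, map_sub, coeff_mul_X_pow', coeff_one]
  simp only [geomAux, coeff_mk]
  by_cases hn : n = 0
  · subst hn
    simp [hm.ne']
  · rw [if_neg hn]
    by_cases h : m ≤ n
    · have : m ∣ n - m ↔ m ∣ n := by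
        rw [Nat.dvd_sub_self_right]
        constructor
        · rintro (h1 | h1)
          · exact h1
          · rw [le_antisymm h h1]
        · exact Or.inl
      simp [h, this]
    · have : ¬ m ∣ n := fun h' => h (Nat.le_of_dvd (by omega) h')
      simp [h, this]

open PowerSeries Filter in
theorem cast_colouredPartitions (r M : ℕ) (S : Finset (ℕ+ × Fin r))
    (hS : ∀ x : ℕ+ × Fin r, (x.1 : ℕ) ≤ M → x ∈ S) :
    (colouredPartitions r M : ZMod 5) = coeff M (∏ x ∈ S, geomAux (x.1 : ℕ)) := by
  classical
  rw [coeff_prod]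
  simp only [geomAux, coeff_mk]
  simp_rw [Finset.prod_ite_zero, Finset.prod_const_one]
  rw [Finset.sum_boole]
  congr 1
  rw [colouredPartitions, ← Nat.card_eq_finsetCard]
  refine Nat.card_congr
    { toFun := fun f => ⟨Finsupp.onFinset f.1.support (fun x => (x.1 : ℕ) * f.1 x) ?_, ?_⟩
      invFun := fun l => ⟨Finsupp.onFinset l.1.support (fun x => l.1 x / (x.1 : ℕ)) ?_, ?_⟩
      left_inv := ?_
      right_inv := ?_ }
  · intro a ha
    rw [Finsupp.mem_support_iff]
    intro h
    simp [h] at ha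
  · obtain ⟨f, hf⟩ := f
    have hsub : f.support ⊆ S := by
      intro x hx
      apply hS
      rw [← hf, Finsupp.sum]
      refine le_trans ?_ (Finset.single_le_sum (f := fun x => (x.1 : ℕ) * f x)
        (fun _ _ => Nat.zero_le _) hx)
      exact Nat.le_mul_of_pos_right _ (Nat.pos_of_ne_zero (Finsupp.mem_support_iff.1 hx))
    rw [Finset.mem_filter, Finset.mem_finsuppAntidiag]
    refine ⟨⟨?_, ?_⟩, ?_⟩
    · refine Eq.trans ?_ hf
      rw [Finsupp.sum]
      symm
      apply Finset.sum_subset hsub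
      intro x _ hx
      simpa using hx
    · exact Finsupp.support_onFinset_subset.trans hsub
    · intro x _
      simp
  · intro a ha
    rw [Finsupp.mem_support_iff]
    intro h
    simp [h] at ha
  · obtain ⟨l, hl⟩ := l
    rw [Finset.mem_filter, Finset.mem_finsuppAntidiag] at hl
    obtain ⟨⟨h1, h2⟩, h3⟩ := hl
    rw [Finsupp.sum_of_support_subset _ (Finsupp.support_onFinset_subset.trans h2) _ (by simp)]
    refine Eq.trans ?_ h1
    refine Finset.sum_congr rfl fun x hx => ?_
    exact Nat.mul_div_cancel' (h3 x hx)
  · rintro ⟨f, hf⟩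
    ext x
    simp
  · rintro ⟨l, hl⟩
    rw [Finset.mem_filter, Finset.mem_finsuppAntidiag] at hl
    obtain ⟨⟨h1, h2⟩, h3⟩ := hl
    ext x
    by_cases hx : x ∈ S
    · simpa using Nat.mul_div_cancel' (h3 x hx)
    · have : l x = 0 := by
        by_contra h
        exact hx (h2 (Finsupp.mem_support_iff.2 h))
      simp [this]

open PowerSeries Filter in
theorem pow_five_eq (f : PowerSeries (ZMod 5)) :
    f ^ 5 = expand 5 (by norm_num) f := by
  have : Fact (Nat.Prime 5) := ⟨by norm_num⟩
  have h := MvPowerSeries.map_frobenius_expand (σ := Unit) (R := ZMod 5) 5 (by norm_num) (f := f)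
  rw [ZMod.frobenius_zmod] at h
  rw [← h]
  simp [expand]

open PowerSeries Filter in
theorem colouredPartitions_cong_mod5_4 (k n i : ℕ) (hi : i = 3 ∨ i = 4) :
    5 ∣ colouredPartitions (5 * k + 4) (5 * n + i) := by
  set M := 5 * n + i with hM
  have h1 : ∀ᶠ s : Finset ℕ in atTop, ∀ b ∈ Finset.range (M + 1),
      (∏ n ∈ s, (1 - X ^ (n + 1) : PowerSeries (ZMod 5))).coeff b
        = (pentagonalSeries (ZMod 5)).coeff b :=
    (Filter.eventually_all_finset _).2 fun b _ => coeff_prod_one_sub_X_pow_eventually_eq _ b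
  obtain ⟨N, hN, hNM⟩ := ((tendsto_finset_range.eventually h1).and (eventually_ge_atTop M)).exists
  rw [← ZMod.natCast_eq_zero_iff, cast_colouredPartitions _ _
    ((Finset.range N).map ⟨Nat.succPNat, Nat.succPNat_injective⟩ ×ˢ Finset.univ)]
  · rw [Finset.prod_product]
    simp only [Finset.prod_const, Finset.card_univ, Fintype.card_fin, Finset.prod_map,
      Function.Embedding.coeFn_mk, Nat.succPNat_coe, Finset.prod_pow, Nat.succ_eq_add_one]
    set G := ∏ m ∈ Finset.range N, geomAux (m + 1) with hG
    set P := ∏ n ∈ Finset.range N, (1 - X ^ (n + 1) : PowerSeries (ZMod 5)) with hP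
    have hGP : G * P = 1 := by
      rw [hG, hP, ← Finset.prod_mul_distrib]
      exact Finset.prod_eq_one fun m _ => geomAux_mul _ (by omega)
    have : G ^ (5 * k + 4) = expand 5 (by norm_num) (G ^ (k + 1)) * P := by
      rw [← pow_five_eq, ← pow_mul, show (k + 1) * 5 = (5 * k + 4) + 1 by ring, pow_succ G (5 * k + 4),
        mul_assoc, hGP, mul_one]
    rw [this, coeff_mul]
    refine Finset.sum_eq_zero fun ⟨a, b⟩ hab => ?_
    rw [Finset.HasAntidiagonal.mem_antidiagonal] at hab
    simp only at hab ⊢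
    by_cases ha : 5 ∣ a
    · rw [hN b (by simp; omega), coeff_pentagonalSeries_eq_zero, mul_zero]
      rintro ⟨j, rfl⟩
      have h2 := two_mul_natCast_pentagonal j
      have h3 : (2 * (pentagonal j : ℤ)) % 5 = 1 ∨ (2 * (pentagonal j : ℤ)) % 5 = 3 := by omega
      rw [h2, Int.mul_emod, Int.sub_emod, Int.mul_emod 3] at h3
      have h4 : j % 5 = 0 ∨ j % 5 = 1 ∨ j % 5 = 2 ∨ j % 5 = 3 ∨ j % 5 = 4 := by omega
      rcases h4 with h | h | h | h | h <;> simp [h] at h3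
    · rw [coeff_expand_of_not_dvd _ _ _ ha, zero_mul]
  · intro x hx
    simp only [Finset.mem_product, Finset.mem_map, Finset.mem_range, Function.Embedding.coeFn_mk,
      Finset.mem_univ, and_true]
    exact ⟨x.1.natPred, by have := x.1.natPred_add_one; omega, by simp⟩
end

section
/- For every non-negative integer k and every non-negative integer n, the number of (25k+3)-colour partitions of 25n+22 is divisible by 5; that is, p_{25k+3}(25n+22) ≡ 0 (mod 5). -/
namespace CP5
open PowerSeries

abbrev K := ZMod 5
instance : Fact (Nat.Prime 5) := ⟨by norm_num⟩

noncomputable abbrev F : PowerSeries K := pentagonalSeries K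

def sg (a : ℤ) : K := ((Int.negOnePow a : ℤ) : K)

lemma sg_add (a b : ℤ) : sg (a + b) = sg a * sg b := by
  simp [sg, Int.negOnePow_add]

lemma sg_even {a : ℤ} (h : Even a) : sg a = 1 := by
  simp [sg, Int.negOnePow_even _ h]

lemma sg_odd {a : ℤ} (h : Odd a) : sg a = -1 := by
  simp [sg, Int.negOnePow_odd _ h]

lemma coeff_F_pent (a : ℤ) : coeff (pentagonal a) F = sg a := by
  simp [F, sg]

lemma coeff_F_zero {n : ℕ} (h : ∀ a, pentagonal a ≠ n) : coeff n F = 0 :=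
  coeff_pentagonalSeries_eq_zero K (by simpa using h)

lemma pent_bound (a : ℤ) : |a| ≤ pentagonal a := by
  have h := two_mul_natCast_pentagonal a
  rw [abs_le]
  rcases lt_trichotomy a 0 with h0 | h0 | h0
  · constructor <;> nlinarith
  · subst h0; simp
  · constructor <;> nlinarith

noncomputable def S (N : ℕ) : Finset (ℤ × ℤ) :=
  ((Finset.Icc (-(N:ℤ)) N) ×ˢ (Finset.Icc (-(N:ℤ)) N)).filter
    (fun p => pentagonal p.1 + pentagonal p.2 = N)

lemma mem_S {N : ℕ} {p : ℤ × ℤ} : p ∈ S N ↔ pentagonal p.1 + pentagonal p.2 = N := by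
  unfold S
  simp only [Finset.mem_filter, Finset.mem_product, Finset.mem_Icc, and_iff_right_iff_imp]
  intro h
  have h1 := abs_le.1 (pent_bound p.1)
  have h2 := abs_le.1 (pent_bound p.2)
  omega

lemma mem_S' {N : ℕ} {p : ℤ × ℤ} :
    p ∈ S N ↔ p.1 * (3 * p.1 - 1) + p.2 * (3 * p.2 - 1) = 2 * (N : ℤ) := by
  rw [mem_S, ← two_mul_natCast_pentagonal, ← two_mul_natCast_pentagonal]
  omega

lemma coeff_F_sq (N : ℕ) : coeff N (F ^ 2) = ∑ p ∈ S N, sg (p.1 + p.2) := by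
  rw [sq, coeff_mul]
  symm
  apply Finset.sum_of_injOn (fun p : ℤ × ℤ => (pentagonal p.1, pentagonal p.2))
  · rintro ⟨a, b⟩ _ ⟨c, d⟩ _ h
    simpa using h
  · intro p hp
    simpa using mem_S.1 hp
  · rintro ⟨i, j⟩ hij hn
    by_cases hi : ∃ a, pentagonal a = i
    · by_cases hj : ∃ b, pentagonal b = j
      · obtain ⟨a, rfl⟩ := hi
        obtain ⟨b, rfl⟩ := hj
        exfalso
        apply hn
        refine ⟨(a, b), ?_, rfl⟩
        exact mem_S.2 (by simpa using hij)
      · push Not at hj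
        simp [coeff_F_zero hj]
    · push Not at hi
      simp [coeff_F_zero hi]
  · intro p _
    rw [coeff_F_pent, coeff_F_pent, sg_add]

lemma sum_C1 (N : ℕ) :
    ∑ p ∈ (S N).filter (fun p => (5:ℤ) ∣ 3 * p.1 - 4 * p.2 + 1), sg (p.1 + p.2) = 0 := by
  have key : ∀ p : ℤ × ℤ, (5:ℤ) ∣ 3 * p.1 - 4 * p.2 + 1 →
      sg (p.1 + p.2) + sg ((3 * p.1 - 4 * p.2 + 1) / 5 + (-4 * p.1 - 3 * p.2 + 2) / 5) = 0 := by
    rintro ⟨a, b⟩ h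
    simp only at h ⊢
    rcases Int.even_or_odd (a + b) with h1 | h1
    · rw [sg_even h1, sg_odd]
      · simp
      · rw [Int.odd_iff]; rw [Int.even_iff] at h1; omega
    · rw [sg_odd h1, sg_even]
      · simp
      · rw [Int.even_iff]; rw [Int.odd_iff] at h1; omega
  refine Finset.sum_involution
    (fun p _ => ((3 * p.1 - 4 * p.2 + 1) / 5, (-4 * p.1 - 3 * p.2 + 2) / 5)) ?_ ?_ ?_ ?_
  · intro p hp
    exact key p (Finset.mem_filter.1 hp).2
  · rintro ⟨a, b⟩ hp _ heq
    have h := (Finset.mem_filter.1 hp).2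
    simp only [Prod.mk.injEq] at heq h
    omega
  · rintro ⟨a, b⟩ hp
    have h := (Finset.mem_filter.1 hp).2
    have h1 := mem_S'.1 (Finset.mem_filter.1 hp).1
    simp only at h h1
    obtain ⟨c, hc⟩ := h
    obtain ⟨d, hd⟩ : (5:ℤ) ∣ -4 * a - 3 * b + 2 := by omega
    simp only [Finset.mem_filter, mem_S']
    rw [hc, hd, Int.mul_ediv_cancel_left _ (by norm_num), Int.mul_ediv_cancel_left _ (by norm_num)]
    refine ⟨?_, by omega⟩
    have : (25:ℤ) * (c * (3 * c - 1) + d * (3 * d - 1)) = 25 * (2 * (N:ℤ)) := by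
      linear_combination 25 * h1 - (3 * (5 * c + (3 * a - 4 * b + 1)) - 5) * hc
        - (3 * (5 * d + (-4 * a - 3 * b + 2)) - 5) * hd
    linarith
  · rintro ⟨a, b⟩ hp
    have h := (Finset.mem_filter.1 hp).2
    simp only [Prod.mk.injEq] at h ⊢
    omega

lemma sum_C2 (N : ℕ) :
    ∑ p ∈ (S N).filter (fun p => (5:ℤ) ∣ 3 * p.2 - 4 * p.1 + 1), sg (p.1 + p.2) = 0 := by
  rw [← sum_C1 N]
  refine Finset.sum_nbij' Prod.swap Prod.swap ?_ ?_ ?_ ?_ ?_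
  · intro p; simp only [Finset.mem_filter, mem_S, Prod.fst_swap, Prod.snd_swap]; omega
  · intro p; simp only [Finset.mem_filter, mem_S, Prod.fst_swap, Prod.snd_swap]; omega
  · simp
  · simp
  · intro p _; simp [add_comm]

lemma sum_C12 (m : ℕ) :
    ∑ p ∈ (S (5 * m + 2)).filter (fun p => (5:ℤ) ∣ 3 * p.1 - 4 * p.2 + 1 ∧
      (5:ℤ) ∣ 3 * p.2 - 4 * p.1 + 1), sg (p.1 + p.2) =
      coeff m (expand 5 (by norm_num) (F ^ 2)) := by
  rw [coeff_expand]
  split_ifs with h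
  · obtain ⟨t, rfl⟩ := h
    rw [Nat.mul_div_cancel_left _ (by norm_num), coeff_F_sq]
    symm
    refine Finset.sum_nbij' (fun p => (1 - 5 * p.1, 1 - 5 * p.2))
      (fun p => ((1 - p.1) / 5, (1 - p.2) / 5)) ?_ ?_ ?_ ?_ ?_
    · rintro ⟨a, b⟩ hp
      have := mem_S'.1 hp
      simp only [Finset.mem_filter, mem_S'] at this ⊢
      refine ⟨?_, by omega, by omega⟩
      push_cast
      linarith
    · rintro ⟨a, b⟩ hp
      simp only [Finset.mem_filter, mem_S'] at hp ⊢
      obtain ⟨h1, h2, h3⟩ := hp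
      obtain ⟨c, hc⟩ : (5:ℤ) ∣ 1 - a := by omega
      obtain ⟨d, hd⟩ : (5:ℤ) ∣ 1 - b := by omega
      rw [hc, hd, Int.mul_ediv_cancel_left _ (by norm_num),
        Int.mul_ediv_cancel_left _ (by norm_num)]
      obtain rfl : a = 1 - 5 * c := by omega
      obtain rfl : b = 1 - 5 * d := by omega
      push_cast at h1
      linarith
    · rintro ⟨a, b⟩ _
      simp only [Prod.mk.injEq]; omega
    · rintro ⟨a, b⟩ hp
      have := (Finset.mem_filter.1 hp).2
      simp only [Prod.mk.injEq] at this ⊢; omega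
    · rintro ⟨a, b⟩ _
      simp only
      rcases Int.even_or_odd (a + b) with h1 | h1
      · rw [sg_even h1, sg_even]
        rw [Int.even_iff] at *; omega
      · rw [sg_odd h1, sg_odd]
        rw [Int.odd_iff] at *; omega
  · apply Finset.sum_eq_zero
    rintro ⟨a, b⟩ hp
    exfalso
    simp only [Finset.mem_filter, mem_S'] at hp
    obtain ⟨h1, h2, h3⟩ := hp
    obtain ⟨c, hc⟩ : (5:ℤ) ∣ 1 - a := by omega
    obtain ⟨d, hd⟩ : (5:ℤ) ∣ 1 - b := by omega
    obtain rfl : a = 1 - 5 * c := by omega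
    obtain rfl : b = 1 - 5 * d := by omega
    push_cast at h1
    apply h
    ring_nf at h1
    omega

lemma quad_mod {a b : ℤ} {m : ℕ} (h : a * (3 * a - 1) + b * (3 * b - 1) = 2 * ((5 * m + 2 : ℕ) : ℤ)) :
    (5:ℤ) ∣ 3 * a - 4 * b + 1 ∨ (5:ℤ) ∣ 3 * b - 4 * a + 1 := by
  have hp : Prime (5:ℤ) := Int.prime_iff_natAbs_prime.2 (by norm_num)
  apply hp.dvd_or_dvd
  push_cast at h
  exact ⟨5 * a * b - a - b - 3 - 8 * m, by linear_combination (-4) * h⟩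

lemma coeff_F_sq_2 (m : ℕ) :
    coeff (5 * m + 2) (F ^ 2) = - coeff m (expand 5 (by norm_num) (F ^ 2)) := by
  have h1 := sum_C1 (5 * m + 2)
  have h2 := sum_C2 (5 * m + 2)
  have h3 := Finset.sum_union_inter (f := fun p : ℤ × ℤ => sg (p.1 + p.2))
    (s₁ := (S (5 * m + 2)).filter (fun p => (5:ℤ) ∣ 3 * p.1 - 4 * p.2 + 1))
    (s₂ := (S (5 * m + 2)).filter (fun p => (5:ℤ) ∣ 3 * p.2 - 4 * p.1 + 1))
  rw [← Finset.filter_or, ← Finset.filter_and, h1, h2, sum_C12, Finset.filter_true_of_mem,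
    ← coeff_F_sq] at h3
  · linear_combination h3
  · intro p hp
    exact quad_mod (mem_S'.1 hp)

/-- residue 1 part of F -/
lemma coeff_F_1 (m : ℕ) :
    coeff (5 * m + 1) F = - coeff m (expand 5 (by norm_num) F) := by
  rw [coeff_expand]
  have hp : ∀ a : ℤ, pentagonal a = 5 * m + 1 → ∃ c : ℤ, a = 1 - 5 * c ∧ m = 5 * pentagonal c := by
    intro a ha
    have h := two_mul_natCast_pentagonal a
    rw [ha] at h
    push_cast at h
    have : (5:ℤ) ∣ 1 - a := by
      have hp : Prime (5:ℤ) := Int.prime_iff_natAbs_prime.2 (by norm_num)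
      have : (5:ℤ) ∣ (1 - a) * (1 - a) := ⟨4 * m + 1 - a ^ 2, by linear_combination (-2) * h⟩
      rcases hp.dvd_or_dvd this with h | h <;> exact h
    obtain ⟨c, hc⟩ := this
    obtain rfl : a = 1 - 5 * c := by omega
    refine ⟨c, rfl, ?_⟩
    have h' := two_mul_natCast_pentagonal c
    zify
    linarith
  by_cases hm : ∃ a, pentagonal a = 5 * m + 1
  · obtain ⟨a, ha⟩ := hm
    obtain ⟨c, rfl, hc⟩ := hp a ha
    rw [← ha, coeff_F_pent, if_pos ⟨_, hc⟩, hc, Nat.mul_div_cancel_left _ (by norm_num),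
      coeff_F_pent]
    rcases Int.even_or_odd c with h1 | h1
    · rw [sg_even h1, sg_odd]
      rw [Int.even_iff] at *; rw [Int.odd_iff]; omega
    · rw [sg_odd h1, sg_even]
      · simp
      rw [Int.odd_iff] at *; rw [Int.even_iff]; omega
  · push Not at hm
    rw [coeff_F_zero hm]
    split_ifs with h5
    · obtain ⟨t, rfl⟩ := h5
      rw [Nat.mul_div_cancel_left _ (by norm_num), coeff_F_zero]
      · simp
      intro c hc
      apply hm (1 - 5 * c)
      have h1 := two_mul_natCast_pentagonal (1 - 5 * c)
      have h2 := two_mul_natCast_pentagonal c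
      rw [hc] at h2
      zify
      linarith
    · simp

lemma coeff_F_34 (n : ℕ) (hn : n % 5 = 3 ∨ n % 5 = 4) : coeff n F = 0 := by
  apply coeff_F_zero
  intro a ha
  have h := two_mul_natCast_pentagonal a
  rw [ha] at h
  have : a % 5 = 0 ∨ a % 5 = 1 ∨ a % 5 = 2 ∨ a % 5 = 3 ∨ a % 5 = 4 := by omega
  have h2 : (2 * (n:ℤ)) % 5 = ((a % 5) * (3 * (a % 5) - 1)) % 5 := by
    rw [h]; simp [Int.mul_emod, Int.sub_emod]
  rcases this with h' | h' | h' | h' | h' <;> rw [h'] at h2 <;> omega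

lemma F_pow5 : F ^ 5 = expand 5 (by norm_num) F := by
  have := MvPowerSeries.map_frobenius_expand (σ := Unit) (R := ZMod 5) 5 (by norm_num) (f := F)
  rw [ZMod.frobenius_zmod] at this
  rw [← this]
  simp [expand]

def Sup (r : ℕ) (f : PowerSeries K) : Prop := ∀ n, n % 5 ≠ r % 5 → coeff n f = 0

lemma Sup.mul {r s : ℕ} {f g : PowerSeries K} (hf : Sup r f) (hg : Sup s g) :
    Sup (r + s) (f * g) := by
  intro n hn
  rw [coeff_mul]
  apply Finset.sum_eq_zero
  rintro ⟨i, j⟩ hij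
  have hij : i + j = n := by simpa using hij
  by_cases h : i % 5 = r % 5
  · have : j % 5 ≠ s % 5 := by omega
    simp [hg j this]
  · simp [hf i h]

lemma Sup.pow {r : ℕ} {f : PowerSeries K} (hf : Sup r f) (k : ℕ) : Sup (k * r) (f ^ k) := by
  induction k with
  | zero =>
    intro n hn
    rw [pow_zero, coeff_one, if_neg]
    rintro rfl
    simp at hn
  | succ k ih =>
    rw [pow_succ, add_mul, one_mul]
    exact ih.mul hf

noncomputable def A0 : PowerSeries K := mk fun n => if n % 5 = 0 then coeff n F else 0
noncomputable def A2 : PowerSeries K := mk fun n => if n % 5 = 2 then coeff n F else 0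
noncomputable def A1 : PowerSeries K := - (X * expand 25 (by norm_num) F)

lemma sup0 : Sup 0 A0 := by
  intro n hn
  rw [A0, coeff_mk, if_neg (by omega)]

lemma sup2 : Sup 2 A2 := by
  intro n hn
  rw [A2, coeff_mk, if_neg (by omega)]

lemma sup1 : Sup 1 A1 := by
  intro n hn
  rw [A1, map_neg, neg_eq_zero]
  cases n with
  | zero => simp
  | succ n =>
    rw [coeff_succ_X_mul, coeff_expand, if_neg (by omega)]

lemma coeff_expand25 (f : PowerSeries K) (m : ℕ) :
    coeff (5 * m) (expand 25 (by norm_num) f) = coeff m (expand 5 (by norm_num) f) := by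
  have := expand_mul 5 (by norm_num) 5 (by norm_num) f
  rw [← coeff_expand_mul 5 (by norm_num) (expand 5 (by norm_num) f) m, ← this]

lemma F_eq : F = A0 + A1 + A2 := by
  ext n
  rw [map_add, map_add]
  have h : n % 5 = 0 ∨ n % 5 = 1 ∨ n % 5 = 2 ∨ n % 5 = 3 ∨ n % 5 = 4 := by omega
  rcases h with h | h | h | h | h
  · rw [sup1 n (by omega), sup2 n (by omega), A0, coeff_mk, if_pos h]; simp
  · rw [sup0 n (by omega), sup2 n (by omega)]
    obtain ⟨m, rfl⟩ : ∃ m, n = 5 * m + 1 := ⟨n / 5, by omega⟩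
    rw [A1, map_neg, coeff_succ_X_mul, coeff_F_1, coeff_expand25]; simp
  · rw [sup1 n (by omega), sup0 n (by omega), A2, coeff_mk, if_pos h]; simp
  · rw [sup1 n (by omega), sup0 n (by omega), sup2 n (by omega), coeff_F_34 n (by omega)]; simp
  · rw [sup1 n (by omega), sup0 n (by omega), sup2 n (by omega), coeff_F_34 n (by omega)]; simp

lemma A0A2 : A0 * A2 = - A1 ^ 2 := by
  ext n
  rw [map_neg]
  by_cases h : n % 5 = 2
  · obtain ⟨m, rfl⟩ : ∃ m, n = 5 * m + 2 := ⟨n / 5, by omega⟩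
    have h1 := coeff_F_sq_2 m
    have h2 : coeff (5 * m + 2) (A1 ^ 2) = coeff m (expand 5 (by norm_num) (F ^ 2)) := by
      rw [A1, neg_sq, mul_pow, coeff_X_pow_mul, ← map_pow, coeff_expand25]
    have h3 : F ^ 2 = A0 * A0 + (A0 * A1 + A0 * A1) + (A0 * A2 + A0 * A2) + A1 ^ 2
      + (A1 * A2 + A1 * A2) + A2 * A2 := by
      rw [F_eq]; ring
    rw [← h2, h3] at h1
    simp only [map_add] at h1
    rw [(sup0.mul sup0) _ (by omega), (sup0.mul sup1) _ (by omega), (sup1.mul sup2) _ (by omega),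
      (sup2.mul sup2) _ (by omega)] at h1
    have h5 : (5 : K) = 0 := by decide
    linear_combination 3 * h1 - (coeff (5 * m + 2) (A0 * A2) + coeff (5 * m + 2) (A1 ^ 2)) * h5
  · rw [(sup0.mul sup2) n (by omega), (sup1.pow 2) n (by omega)]
    simp

lemma ramanujan (i : ℕ) : coeff (5 * i + 4) (F ^ 4) = 0 := by
  have h5 : (5 : PowerSeries K) = 0 := by
    have : (5 : K) = 0 := by decide
    calc (5 : PowerSeries K) = C (5 : K) := (map_ofNat (C (R := K)) 5).symm
      _ = 0 := by rw [this]; simp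
  have h3 : F ^ 4 = A0 ^ 4 + 4 • (A0 ^ 3 * A1) + 4 • (A0 ^ 3 * A2) + 6 • (A0 ^ 2 * A1 ^ 2) +
     12 • (A0 ^ 2 * A1 * A2) + 4 • (A0 * A1 ^ 3) + 4 • (A1 ^ 3 * A2) + 12 • (A0 * A1 * A2 ^ 2)
     + 4 • (A0 * A2 ^ 3) + 6 • (A1 ^ 2 * A2 ^ 2) + 4 • (A1 * A2 ^ 3) + A2 ^ 4 := by
    rw [F_eq]
    simp only [nsmul_eq_mul]
    push_cast
    linear_combination (12 * A1 ^ 2 + 6 * (A0 * A2 - A1 ^ 2)) * A0A2 - A1 ^ 4 * h5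
  rw [h3]
  simp only [map_add, map_nsmul]
  rw [sup0.pow 4 _ (by omega), (sup0.pow 3).mul sup1 _ (by omega),
    (sup0.pow 3).mul sup2 _ (by omega), (sup0.pow 2).mul (sup1.pow 2) _ (by omega),
    ((sup0.pow 2).mul sup1).mul sup2 _ (by omega), sup0.mul (sup1.pow 3) _ (by omega),
    (sup1.pow 3).mul sup2 _ (by omega), (sup0.mul sup1).mul (sup2.pow 2) _ (by omega),
    sup0.mul (sup2.pow 3) _ (by omega), (sup1.pow 2).mul (sup2.pow 2) _ (by omega),
    sup1.mul (sup2.pow 3) _ (by omega), sup2.pow 4 _ (by omega)]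
  simp

/-- extraction -/
lemma coeff_mul_expand (p : ℕ) (hp : p ≠ 0) (r : ℕ) (hr : r < p) (f f' g : PowerSeries K)
    (h : ∀ i, coeff (p * i + r) f = coeff i f') (n : ℕ) :
    coeff (p * n + r) (f * expand p hp g) = coeff n (f' * g) := by
  rw [coeff_mul, coeff_mul]
  symm
  apply Finset.sum_of_injOn (fun x : ℕ × ℕ => (p * x.1 + r, p * x.2))
  · rintro ⟨a, b⟩ _ ⟨c, d⟩ _ h
    simpa [hp] using h
  · rintro ⟨a, b⟩ hab
    have : a + b = n := by simpa using hab
    subst this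
    simp; ring
  · rintro ⟨i, j⟩ hij hn
    have hij : i + j = p * n + r := by simpa using hij
    by_cases hj : p ∣ j
    · exfalso
      obtain ⟨b, rfl⟩ := hj
      have hb : b ≤ n := by
        by_contra hb
        have : p * (n + 1) ≤ p * b := Nat.mul_le_mul_left _ (by omega)
        rw [mul_add] at this
        omega
      apply hn
      refine ⟨(n - b, b), by simp; omega, ?_⟩
      have : p * n = p * (n - b) + p * b := by rw [← mul_add]; congr 1; omega
      simp only [Prod.mk.injEq, and_true]
      omega
    · simp [coeff_expand_of_not_dvd p hp g hj]
  · rintro ⟨a, b⟩ _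
    rw [h, coeff_expand_mul]

lemma coeff_F22 (n : ℕ) : coeff (25 * n + 22) (F ^ 22) = 0 := by
  have e : F ^ 22 = F ^ 2 * expand 5 (by norm_num) (F ^ 4) := by
    rw [map_pow, ← F_pow5]; ring
  have h := coeff_mul_expand 5 (by norm_num) 2 (by norm_num) (F ^ 2)
    (-expand 5 (by norm_num) (F ^ 2)) (F ^ 4) (fun i => by rw [coeff_F_sq_2, map_neg]) (5 * n + 4)
  rw [e, show 25 * n + 22 = 5 * (5 * n + 4) + 2 by ring, h, neg_mul, mul_comm (expand 5 _ (F ^ 2)), map_neg,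
    coeff_mul_expand 5 (by norm_num) 4 (by norm_num) (F ^ 4) 0 (F ^ 2)
      (fun i => by rw [ramanujan]; simp)]
  simp

lemma coeff_of_inv (k n : ℕ) (G : PowerSeries K) (hG : G * F ^ (25 * k + 3) = 1) :
    coeff (25 * n + 22) G = 0 := by
  have hF : G * F ^ (25 * k + 2) * F = 1 := by rw [← hG]; ring
  set H := G * F ^ (25 * k + 2)
  have e25 : expand 25 (by norm_num) F = F ^ 25 := by
    have := expand_mul 5 (by norm_num) 5 (by norm_num) F
    rw [← F_pow5, map_pow, ← F_pow5, ← pow_mul] at this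
    exact this
  have : G = F ^ 22 * expand 25 (by norm_num) (H ^ (k + 1)) := by
    have h1 : expand 25 (by norm_num) (H ^ (k + 1)) * F ^ (25 * (k + 1)) = 1 := by
      rw [pow_mul, ← e25, ← map_pow, ← map_mul, ← mul_pow, hF]; simp
    calc G = G * (expand 25 (by norm_num) (H ^ (k + 1)) * F ^ (25 * (k + 1))) := by rw [h1, mul_one]
      _ = (G * F ^ (25 * k + 3)) * F ^ 22 * expand 25 (by norm_num) (H ^ (k + 1)) := by ring
      _ = _ := by rw [hG, one_mul]
  rw [this, coeff_mul_expand 25 (by norm_num) 22 (by norm_num) (F ^ 22) 0 _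
      (fun i => by rw [coeff_F22]; simp)]
  simp

noncomputable def geo (w : ℕ) : PowerSeries K := mk fun n => if w ∣ n then 1 else 0

lemma geo_mul (w : ℕ) (hw : w ≠ 0) : geo w * (1 - X ^ w) = 1 := by
  have : geo w = expand w hw (mk 1) := by
    ext n; simp [geo, coeff_expand]
  have h := congrArg (expand w hw) (mk_one_mul_one_sub_eq_one K)
  simpa [this] using h

open Classical in
lemma count (r n N : ℕ) (hN : n ≤ N) :
    ((colouredPartitions r n : ℕ) : K) =
      coeff n (∏ x ∈ ((Finset.range N).image Nat.succPNat) ×ˢ (Finset.univ : Finset (Fin r)),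
        geo (x.1 : ℕ)) := by
  set s := ((Finset.range N).image Nat.succPNat) ×ˢ (Finset.univ : Finset (Fin r)) with hs
  have hmem : ∀ x : ℕ+ × Fin r, (x.1 : ℕ) ≤ N → x ∈ s := by
    intro x hx
    simp only [hs, Finset.mem_product, Finset.mem_image, Finset.mem_range, Finset.mem_univ,
      and_true]
    exact ⟨x.1.natPred, by have := x.1.pos; simp [PNat.natPred]; omega, by simp⟩
  rw [coeff_prod]
  have h1 : ∀ l : ℕ+ × Fin r →₀ ℕ, ∏ i ∈ s, coeff (l i) (geo (i.1 : ℕ)) =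
      if ∀ i ∈ s, (i.1 : ℕ) ∣ l i then 1 else 0 := by
    intro l
    simp only [geo, coeff_mk]
    rw [Finset.prod_ite_zero]
    simp
  simp only [h1]
  rw [Finset.sum_boole]
  congr 1
  rw [colouredPartitions, ← Nat.card_eq_finsetCard]
  let toL : (ℕ+ × Fin r →₀ ℕ) → (ℕ+ × Fin r →₀ ℕ) := fun f =>
    Finsupp.zipWith (fun a b => a * b) (by simp) (Finsupp.onFinset f.support
      (fun x => if x ∈ f.support then (x.1 : ℕ) else 0) (by intro a; simp)) f
  have toL_apply : ∀ f x, toL f x = (x.1 : ℕ) * f x := by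
    intro f x
    by_cases hx : f x = 0 <;> simp [toL, hx]
  have hsupp : ∀ f : ℕ+ × Fin r →₀ ℕ, (f.sum fun x m => (x.1 : ℕ) * m) = n → f.support ⊆ s := by
    intro f hf x hx
    apply hmem
    refine le_trans ?_ hN
    rw [← hf, Finsupp.sum]
    refine le_trans ?_ (Finset.single_le_sum (f := fun x => (x.1 : ℕ) * f x)
      (fun _ _ => Nat.zero_le _) hx)
    exact Nat.le_mul_of_pos_right _ (Nat.pos_of_ne_zero (by simpa using hx))
  apply Nat.card_congr
  refine Equiv.ofBijective (fun f => ⟨toL f.1, ?_⟩) ⟨?_, ?_⟩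
  · simp only [Finset.mem_filter, Finset.mem_finsuppAntidiag]
    refine ⟨⟨?_, ?_⟩, ?_⟩
    · simp only [toL_apply]
      refine Eq.trans ?_ f.2
      rw [Finsupp.sum]
      symm
      apply Finset.sum_subset (hsupp f.1 f.2)
      intro x _ hx
      simp at hx
      simp [hx]
    · intro x hx
      apply hsupp f.1 f.2
      simp [toL_apply] at hx ⊢
      exact hx
    · intro i _
      simp [toL_apply]
  · rintro ⟨f, hf⟩ ⟨g, hg⟩ h
    have h : toL f = toL g := by simpa using h
    ext x
    have := DFunLike.congr_fun h x
    rw [toL_apply, toL_apply] at this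
    exact Nat.eq_of_mul_eq_mul_left x.1.pos this
  · rintro ⟨l, hl⟩
    simp only [Finset.mem_filter, Finset.mem_finsuppAntidiag] at hl
    obtain ⟨⟨h1, h2⟩, h3⟩ := hl
    let f : ℕ+ × Fin r →₀ ℕ := Finsupp.onFinset l.support (fun x => l x / (x.1 : ℕ))
      (by intro a ha; simp only [Finsupp.mem_support_iff]; intro h; simp [h] at ha)
    have hf : ∀ x, (x.1 : ℕ) * f x = l x := by
      intro x
      simp only [f, Finsupp.onFinset_apply]
      by_cases hx : l x = 0
      · simp [hx]
      · exact Nat.mul_div_cancel' (h3 x (h2 (by simpa using hx)))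
    refine ⟨⟨f, ?_⟩, ?_⟩
    · rw [Finsupp.sum, ← h1]
      simp only [hf]
      apply Finset.sum_subset
      · intro x hx
        apply h2
        have := hf x
        simp at hx ⊢
        rw [← this]
        have := x.1.ne_zero
        simp [hx]
      · intro x _ hx
        have := hf x
        simp at hx
        rw [← this, hx, mul_zero]
    · ext x
      simp only
      rw [toL_apply, hf]

open Classical in
lemma genfun (r n : ℕ) (H : PowerSeries K) (hH : H * F ^ r = 1) :
    ((colouredPartitions r n : ℕ) : K) = coeff n H := by
  obtain ⟨N, hN, hc⟩ : ∃ N, n ≤ N ∧ ∀ d ∈ Finset.range (n + 1),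
      coeff d (∏ m ∈ Finset.range N, (1 - X ^ (m + 1) : PowerSeries K)) = coeff d F := by
    have h : ∀ᶠ s in (Filter.atTop : Filter (Finset ℕ)), ∀ d ∈ Finset.range (n + 1),
        coeff d (∏ m ∈ s, (1 - X ^ (m + 1) : PowerSeries K)) = coeff d F := by
      rw [Filter.eventually_all_finset]
      intro d _
      exact coeff_prod_one_sub_X_pow_eventually_eq K d
    have h2 := Filter.tendsto_finset_range.eventually h
    obtain ⟨N, h3, h4⟩ := ((Filter.eventually_ge_atTop n).and h2).exists
    exact ⟨N, h3, h4⟩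
  rw [count r n N hN]
  set P := ∏ m ∈ Finset.range N, (1 - X ^ (m + 1) : PowerSeries K) with hP
  set Q := ∏ x ∈ ((Finset.range N).image Nat.succPNat) ×ˢ (Finset.univ : Finset (Fin r)),
        geo (x.1 : ℕ) with hQ
  have hQP : Q * P ^ r = 1 := by
    have : Q = (∏ m ∈ Finset.range N, geo (m + 1)) ^ r := by
      rw [hQ, Finset.prod_product, Finset.prod_image (fun a _ b _ h => Nat.succPNat_injective h)]
      simp [Finset.prod_pow]
    rw [this, ← mul_pow, hP, ← Finset.prod_mul_distrib,
      Finset.prod_congr rfl (fun m _ => geo_mul (m + 1) (by omega))]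
    simp
  have hd : (X : PowerSeries K) ^ (n + 1) ∣ F - P := by
    rw [X_pow_dvd_iff]
    intro m hm
    rw [map_sub, hc m (by simpa using hm), sub_self]
  have hd2 : (X : PowerSeries K) ^ (n + 1) ∣ Q - H := by
    have h1 : F - P ∣ F ^ r - P ^ r := sub_dvd_pow_sub_pow _ _ _
    have h2 : Q - H = (F ^ r - P ^ r) * (Q * H) := by
      linear_combination H * hQP - Q * hH
    rw [h2]
    exact (hd.trans h1).mul_right _
  have := X_pow_dvd_iff.1 hd2 n (by omega)
  rw [map_sub] at this
  exact sub_eq_zero.1 this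

lemma F_const : constantCoeff F = 1 := by
  have h := coeff_F_pent 0
  have h0 : pentagonal 0 = 0 := by simp [pentagonal_def]
  rw [h0, sg_even (by simp)] at h
  simpa using h

end CP5

theorem colouredPartitions_cong_mod5_25k3 (k n : ℕ) :
    5 ∣ colouredPartitions (25 * k + 3) (25 * n + 22) := by
  have hinv : (CP5.F ^ (25 * k + 3))⁻¹ * CP5.F ^ (25 * k + 3) = 1 := by
    apply PowerSeries.inv_mul_cancel
    rw [map_pow, CP5.F_const]
    simp
  rw [← ZMod.natCast_eq_zero_iff, CP5.genfun _ _ _ hinv]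
  exact CP5.coeff_of_inv k n _ hinv
end

section
/- For every non-negative integer k and every non-negative integer n, the number of (7k+1)-colour partitions of 7n+5 is divisible by 7; that is, p_{7k+1}(7n+5) ≡ 0 (mod 7). -/
namespace CP7

open PowerSeries Finset

instance fact7 : Fact (Nat.Prime 7) := ⟨by norm_num⟩

noncomputable def P (n : ℕ) : PowerSeries (ZMod 7) := ∏ i ∈ range n, (1 - X ^ (i + 1))

noncomputable def V (n : ℕ) : PowerSeries (ZMod 7) := (P n)⁻¹

lemma P_mul_V (n : ℕ) : P n * V n = 1 := by
  apply PowerSeries.mul_inv_cancel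
  simp [P, map_prod]

lemma P_succ (n : ℕ) : P (n + 1) = P n * (1 - X ^ (n + 1)) := by
  simp [P, prod_range_succ]

lemma V_succ (n : ℕ) : V n = (1 - X ^ (n + 1)) * V (n + 1) := by
  have h1 := P_mul_V n
  have h2 := P_mul_V (n + 1)
  rw [P_succ] at h2
  linear_combination (-V n) * h2 + (1 - X ^ (n + 1)) * V (n + 1) * h1

lemma V_zero : V 0 = 1 := by
  have := P_mul_V 0
  simpa [P] using this

def T (j : ℕ) : ℕ := j * (j + 1) / 2

lemma T_succ (j : ℕ) : T (j + 1) = T j + (j + 1) := by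
  unfold T
  rw [show (j + 1) * (j + 1 + 1) = j * (j + 1) + (j + 1) * 2 by ring]
  omega

lemma T_two (j : ℕ) : 2 * T j = j * (j + 1) := by
  induction j with
  | zero => rfl
  | succ j ih => rw [T_succ]; linarith

noncomputable def c (n j : ℕ) : PowerSeries (ZMod 7) :=
  if j ≤ n then X ^ T j * P (2 * n + 1) * V (n - j) * V (n + 1 + j) else 0

lemma c_of_lt {n j : ℕ} (h : n < j) : c n j = 0 := by
  simp [c, h]

lemma c_add (j d : ℕ) :
    c (j + d) j = X ^ T j * P (2 * (j + d) + 1) * V d * V (j + d + 1 + j) := by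
  simp [c]

lemma P_two (n : ℕ) : P (2 * (n + 1) + 1) =
    P (2 * n + 1) * (1 - X ^ (2 * n + 2)) * (1 - X ^ (2 * n + 3)) := by
  rw [show 2 * (n + 1) + 1 = 2 * n + 1 + 1 + 1 by ring, P_succ, P_succ]

/-- value of `c (j+d) (j+1)`, normalised -/
lemma c_up (j d : ℕ) : c (j + d) (j + 1) = X ^ (T j + (j + 1)) * P (2 * (j + d) + 1) *
    ((1 - X ^ d) * V d) * V (j + d + 2 + j) := by
  cases d with
  | zero => simp [c_of_lt]
  | succ d =>
    have := c_add (j + 1) d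
    rw [show j + 1 + d = j + (d + 1) by ring, T_succ] at this
    rw [this, ← V_succ]
    rw [show j + (d + 1) + 1 + (j + 1) = j + (d + 1) + 2 + j by ring]

lemma c_rec (n j : ℕ) : c (n + 1) j =
    (1 + X ^ (2 * n + 2)) * c n j + X ^ (n + 1) * (c n (j - 1) + c n (j + 1)) := by
  rcases lt_trichotomy j (n + 1) with h | h | h
  · obtain ⟨d, rfl⟩ := Nat.exists_eq_add_of_le (Nat.lt_succ_iff.mp h)
    have e1 : c (j + d + 1) j = X ^ T j * (P (2 * (j + d) + 1) * (1 - X ^ (2 * (j + d) + 2)) *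
      (1 - X ^ (2 * (j + d) + 3))) * V (d + 1) * V (j + d + 2 + j) := by
      rw [← P_two]; exact c_add j (d + 1)
    have v1 := V_succ d
    have v2 := V_succ (j + d + 1 + j)
    rw [show j + d + 1 + j + 1 = j + d + 2 + j by ring] at v2
    rw [e1, c_up, c_add, v2, v1]
    cases j with
    | zero =>
      have := c_add 0 d
      simp only [zero_add, add_zero, zero_tsub] at *
      rw [this, v1, v2]
      simp [T]
      ring
    | succ j =>
      have := c_add j (d + 1)
      have v3 := V_succ (j + (d + 1) + 1 + j)
      rw [show j + (d + 1) + 1 + j + 1 = j + 1 + d + 1 + (j + 1) by ring] at v3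
      rw [v2] at v3
      rw [v3] at this
      rw [show j + (d + 1) = j + 1 + d by ring] at this
      rw [show j + 1 - 1 = j by rfl, this, T_succ]
      ring
  · subst h
    have h1 := c_add (n + 1) 0
    have h2 := c_add n 0
    simp only [add_zero] at h1 h2
    rw [c_of_lt (show n < n + 1 by omega), c_of_lt (show n < n + 1 + 1 by omega),
      show n + 1 - 1 = n by rfl, h1, h2, T_succ, V_zero]
    have a1 := P_mul_V (2 * n + 1)
    have a2 := P_mul_V (2 * (n + 1) + 1)
    rw [show n + 1 + n = 2 * n + 1 by ring,
      show n + 1 + 1 + (n + 1) = 2 * (n + 1) + 1 by ring]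
    linear_combination X ^ (T n + (n + 1)) * a2 - X ^ (T n + (n + 1)) * a1
  · rw [c_of_lt h, c_of_lt (show n < j by omega), c_of_lt (show n < j - 1 by omega),
      c_of_lt (show n < j + 1 by omega)]
    ring

lemma tele (f : ℕ → PowerSeries (ZMod 7)) (M : ℕ) :
    ∑ j ∈ range M, (-1) ^ j * (2 * (j : PowerSeries (ZMod 7)) + 1) * (f (j - 1) + f (j + 1)) =
    -2 * ∑ j ∈ range M, (-1) ^ j * (2 * (j : PowerSeries (ZMod 7)) + 1) * f j
    - (-1) ^ M * ((2 * M - 1) * f M + (2 * M + 1) * f (M - 1)) := by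
  induction M with
  | zero => simp
  | succ M ih =>
    rw [sum_range_succ, sum_range_succ, ih]
    push_cast
    ring

noncomputable def S (n M : ℕ) : PowerSeries (ZMod 7) :=
  ∑ j ∈ range M, (-1) ^ j * (2 * (j : PowerSeries (ZMod 7)) + 1) * c n j

lemma S_rec (n M : ℕ) (h : n + 1 < M) : S (n + 1) M = (1 - X ^ (n + 1)) ^ 2 * S n M := by
  have t := tele (c n) M
  rw [c_of_lt (show n < M by omega), c_of_lt (show n < M - 1 by omega)] at t
  have : S (n + 1) M = (1 + X ^ (2 * n + 2)) * S n M + X ^ (n + 1) *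
    ∑ j ∈ range M, (-1) ^ j * (2 * (j : PowerSeries (ZMod 7)) + 1) *
      (c n (j - 1) + c n (j + 1)) := by
    unfold S
    rw [mul_sum, mul_sum, ← sum_add_distrib]
    refine sum_congr rfl fun j _ => ?_
    rw [c_rec]
    ring
  rw [this, t]
  unfold S
  ring

lemma S_eq (n M : ℕ) (h : n < M) : S n M = P n ^ 2 := by
  induction n with
  | zero =>
    unfold S
    rw [sum_eq_single 0]
    · have := c_add 0 0
      simp only [add_zero, mul_zero, zero_add] at this
      rw [this]
      have := P_mul_V 1
      simp [V_zero, T, P] at *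
      exact this
    · intro j _ hj
      rw [c_of_lt (by omega), mul_zero]
    · intro h'
      simp at h'
      omega
  | succ n ih =>
    rw [S_rec n M h, ih (by omega), P_succ]
    ring

section trunc
variable {A : Type*} [CommRing A] (φ : PowerSeries (ZMod 7) →+* A) (d : ℕ)
  (hφ : φ (X ^ (d + 1)) = 0)

lemma phi_pow {φ : PowerSeries (ZMod 7) →+* A} {d : ℕ} (hφ : φ (X ^ (d + 1)) = 0)
    {m : ℕ} (h : d < m) : φ (X ^ m) = 0 := by
  obtain ⟨e, rfl⟩ := Nat.exists_eq_add_of_le (Nat.succ_le_of_lt h)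
  rw [Nat.succ_eq_add_one, pow_add, map_mul, hφ, zero_mul]

lemma phi_P {φ : PowerSeries (ZMod 7) →+* A} {d : ℕ} (hφ : φ (X ^ (d + 1)) = 0)
    (e : ℕ) : φ (P (d + e)) = φ (P d) := by
  induction e with
  | zero => rfl
  | succ e ih =>
    rw [← add_assoc, P_succ, map_mul, ih, map_sub, phi_pow hφ (by omega)]
    simp

lemma phi_V {φ : PowerSeries (ZMod 7) →+* A} {d : ℕ} (hφ : φ (X ^ (d + 1)) = 0)
    (e : ℕ) : φ (V (d + e)) = φ (V d) := by
  induction e with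
  | zero => rfl
  | succ e ih =>
    rw [← ih, V_succ (d + e), map_mul, map_sub, phi_pow hφ (by omega)]
    simp [add_assoc]

lemma phi_c {φ : PowerSeries (ZMod 7) →+* A} {d : ℕ} (hφ : φ (X ^ (d + 1)) = 0)
    (j : ℕ) (hj : j ≤ 2 * d) : φ (P d) * φ (c (2 * d) j) = φ (X ^ T j) := by
  have hPV : φ (P d) * φ (V d) = 1 := by rw [← map_mul, P_mul_V, map_one]
  simp only [c, hj, if_true, map_mul]
  by_cases h : j ≤ d
  · rw [show 2 * (2 * d) + 1 = d + (3 * d + 1) by ring,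
      show 2 * d - j = d + (d - j) by omega, show 2 * d + 1 + j = d + (d + 1 + j) by ring,
      phi_P hφ, phi_V hφ, phi_V hφ]
    linear_combination φ (X ^ T j) * (φ (P d) * φ (V d) + 1) * hPV
  · have := T_two j
    have : φ (X ^ T j) = 0 := phi_pow hφ (by nlinarith)
    simp [this]

noncomputable def J (d : ℕ) : PowerSeries (ZMod 7) :=
  ∑ j ∈ range (2 * d + 1), (-1) ^ j * (2 * (j : PowerSeries (ZMod 7)) + 1) * X ^ T j

lemma phi_J {φ : PowerSeries (ZMod 7) →+* A} {d : ℕ} (hφ : φ (X ^ (d + 1)) = 0) :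
    φ (P d ^ 3) = φ (J d) := by
  have h := congrArg φ (S_eq (2 * d) (2 * d + 1) (by omega))
  have h2 : φ (P d ^ 3) = φ (P d) * φ (S (2 * d) (2 * d + 1)) := by
    rw [h, map_pow, map_pow, two_mul d, phi_P hφ]
    ring
  rw [h2, S, J, map_sum, map_sum, mul_sum]
  refine sum_congr rfl fun j hj => ?_
  rw [map_mul, map_mul _ _ (X ^ T j), ← phi_c hφ j (by simp at hj; omega)]
  ring

end trunc

lemma coeff_P6 {d m : ℕ} (hm : m ≤ d) : coeff m (P d ^ 6) = coeff m (J d ^ 2) := by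
  have hφ : Ideal.Quotient.mk (Ideal.span {(X : PowerSeries (ZMod 7)) ^ (d + 1)})
    (X ^ (d + 1)) = 0 := by
    rw [Ideal.Quotient.eq_zero_iff_mem]
    exact Ideal.mem_span_singleton_self _
  have h := phi_J hφ
  have h6 : Ideal.Quotient.mk (Ideal.span {(X : PowerSeries (ZMod 7)) ^ (d + 1)}) (P d ^ 6) =
    Ideal.Quotient.mk _ (J d ^ 2) := by
    rw [map_pow _ (J d), ← h, ← map_pow, ← pow_mul]
  rw [Ideal.Quotient.eq, Ideal.mem_span_singleton, X_pow_dvd_iff] at h6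
  have := h6 m (by omega)
  rwa [map_sub, sub_eq_zero] at this

lemma sq7 : ∀ a b : ZMod 7, a * (a + 1) + b * (b + 1) = 10 → (2 * a + 1) * (2 * b + 1) = 0 := by
  decide

lemma coeff_J2 (d m : ℕ) (hm : m % 7 = 5) : coeff m (J d ^ 2) = 0 := by
  rw [sq, J, sum_mul_sum, map_sum]
  refine sum_eq_zero fun a _ => ?_
  rw [map_sum]
  refine sum_eq_zero fun b _ => ?_
  have e : (-1) ^ a * (2 * (a : PowerSeries (ZMod 7)) + 1) * X ^ T a *
      ((-1) ^ b * (2 * (b : PowerSeries (ZMod 7)) + 1) * X ^ T b) =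
      C ((-1) ^ (a + b) * ((2 * (a : ZMod 7) + 1) * (2 * (b : ZMod 7) + 1))) * X ^ (T a + T b) := by
    simp only [map_mul, map_add, map_pow, map_neg, map_one, map_natCast, map_ofNat]
    ring
  rw [e, coeff_C_mul, coeff_X_pow]
  split_ifs with h
  · rw [sq7]
    · simp
    · have h1 := T_two a
      have h2 := T_two b
      have h3 : ((a * (a + 1) + b * (b + 1) : ℕ) : ZMod 7) = (10 : ℕ) := by
        rw [ZMod.natCast_eq_natCast_iff']
        omega
      exact_mod_cast h3
  · simp

lemma coeff_pow7 (f : PowerSeries (ZMod 7)) (m : ℕ) (hm : ¬ 7 ∣ m) : coeff m (f ^ 7) = 0 := by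
  cases m with
  | zero => simp at hm
  | succ m =>
    have h : derivative (ZMod 7) (f ^ 7) = 0 := by
      rw [Derivation.leibniz_pow]
      rw [← Nat.cast_smul_eq_nsmul (ZMod 7)]
      rw [show ((7 : ℕ) : ZMod 7) = 0 by rfl, zero_smul]
    have h2 := congrArg (coeff m) h
    rw [coeff_derivative] at h2
    have h3 : ((m : ZMod 7) + 1) ≠ 0 := by
      intro h4
      apply hm
      rw [← CharP.cast_eq_zero_iff (ZMod 7) 7]
      exact_mod_cast h4
    simpa [h3] using h2

lemma coeff_V (k d : ℕ) (hd : d % 7 = 5) : coeff d (V d ^ (7 * k + 1)) = 0 := by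
  have : V d ^ (7 * k + 1) = P d ^ 6 * (V d ^ (k + 1)) ^ 7 := by
    have : P d ^ 6 * V d ^ 6 = 1 := by rw [← mul_pow, P_mul_V, one_pow]
    linear_combination (-V d ^ (7 * k + 1)) * this
  rw [this, coeff_mul]
  refine sum_eq_zero fun p hp => ?_
  rw [HasAntidiagonal.mem_antidiagonal] at hp
  by_cases h : 7 ∣ p.2
  · rw [coeff_P6 (by omega), coeff_J2 _ _ (by omega), zero_mul]
  · rw [coeff_pow7 _ _ h, mul_zero]

noncomputable def g (m : ℕ) : PowerSeries (ZMod 7) := PowerSeries.mk fun l => if m ∣ l then 1 else 0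

lemma g_mul (m : ℕ) (hm : 0 < m) : (1 - X ^ m) * g m = 1 := by
  ext l
  rw [sub_mul, one_mul, map_sub, coeff_X_pow_mul', coeff_one, g, coeff_mk]
  rcases Nat.eq_zero_or_pos l with rfl | hl
  · simp [hm.ne']
  · by_cases h : m ≤ l
    · rw [if_pos h, coeff_mk, if_neg hl.ne']
      simp [Nat.dvd_sub_iff_left h dvd_rfl]
    · rw [if_neg h, if_neg hl.ne', if_neg]
      · simp
      · intro h'
        exact h (Nat.le_of_dvd hl h')

def box (r N : ℕ) : Finset (ℕ+ × Fin r) :=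
  ((range N).map ⟨Nat.succPNat, Nat.succPNat_injective⟩) ×ˢ univ

lemma mem_box {r N : ℕ} (x : ℕ+ × Fin r) : x ∈ box r N ↔ (x.1 : ℕ) ≤ N := by
  simp only [box, mem_product, mem_map, mem_range, Function.Embedding.coeFn_mk, mem_univ, and_true]
  constructor
  · rintro ⟨a, ha, h⟩
    rw [← h]
    simpa using ha
  · intro h
    have := x.1.pos
    exact ⟨x.1.natPred, by simp [PNat.natPred]; omega, by simp⟩

lemma prod_box (r N : ℕ) : ∏ x ∈ box r N, g x.1 = V N ^ r := by
  have h : P N ^ r * ∏ x ∈ box r N, g x.1 = 1 := by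
    have : P N ^ r = ∏ x ∈ box r N, (1 - X ^ (x.1 : ℕ)) := by
      rw [box, prod_product, prod_map, P, ← prod_pow]
      simp
    rw [this, ← prod_mul_distrib]
    exact prod_eq_one fun x _ => g_mul _ x.1.pos
  have h2 : P N ^ r * V N ^ r = 1 := by rw [← mul_pow, P_mul_V, one_pow]
  linear_combination (V N ^ r) * h - (∏ x ∈ box r N, g x.1) * h2

lemma count (r d : ℕ) : (colouredPartitions r d : ZMod 7) = coeff d (V d ^ r) := by
  classical
  rw [← prod_box, coeff_prod]
  simp only [g, coeff_mk]
  simp only [prod_boole, sum_boole]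
  congr 1
  rw [colouredPartitions, ← Fintype.card_coe, ← Nat.card_eq_fintype_card]
  refine Nat.card_congr
    { toFun := fun f => ⟨Finsupp.onFinset f.1.support (fun i => (i.1 : ℕ) * f.1 i) ?_, ?_⟩
      invFun := fun l => ⟨Finsupp.onFinset l.1.support (fun i => l.1 i / (i.1 : ℕ)) ?_, ?_⟩
      left_inv := ?_
      right_inv := ?_ }
  · intro i hi
    rw [Finsupp.mem_support_iff]
    rintro h
    simp [h] at hi
  · obtain ⟨f, hf⟩ := f
    have hsub : f.support ⊆ box r d := by
      intro i hi
      rw [mem_box]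
      have h1 : (i.1 : ℕ) * f i ≤ d := by
        rw [← hf, Finsupp.sum]
        exact single_le_sum (f := fun i => (i.1 : ℕ) * f i) (fun _ _ => Nat.zero_le _) hi
      rw [Finsupp.mem_support_iff] at hi
      exact le_trans (Nat.le_mul_of_pos_right _ (Nat.pos_of_ne_zero hi)) h1
    rw [mem_filter, mem_finsuppAntidiag]
    refine ⟨⟨?_, ?_⟩, fun i _ => ?_⟩
    · refine Eq.trans ?_ hf
      rw [Finsupp.sum_of_support_subset f hsub _ (by simp)]
      rfl
    · exact Finsupp.support_onFinset_subset.trans hsub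
    · simp
  · intro i hi
    rw [Finsupp.mem_support_iff]
    rintro h
    simp [h] at hi
  · obtain ⟨l, hl⟩ := l
    rw [mem_filter, mem_finsuppAntidiag] at hl
    obtain ⟨⟨h1, h2⟩, h3⟩ := hl
    rw [Finsupp.sum_of_support_subset _ (Finsupp.support_onFinset_subset.trans h2) _ (by simp)]
    refine Eq.trans ?_ h1
    exact sum_congr rfl fun i hi => Nat.mul_div_cancel' (h3 i hi)
  · intro f
    ext i
    simp
  · intro l
    obtain ⟨l, hl⟩ := l
    rw [mem_filter, mem_finsuppAntidiag] at hl
    obtain ⟨⟨h1, h2⟩, h3⟩ := hl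
    ext i
    by_cases hi : i ∈ box r d
    · simpa using Nat.mul_div_cancel' (h3 i hi)
    · have : l i = 0 := by
        by_contra h
        exact hi (h2 (Finsupp.mem_support_iff.mpr h))
      simp [this]

end CP7

theorem colouredPartitions_cong_mod7_1 (k n : ℕ) :
    7 ∣ colouredPartitions (7 * k + 1) (7 * n + 5) := by
  rw [← CharP.cast_eq_zero_iff (ZMod 7) 7, CP7.count]
  exact CP7.coeff_V k _ (by omega)
end
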